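/- Let K be any field and let E be a finite graph. Let k denote the number of vertices of E which are sinks in E but which are not vertices of E_sf, and let F be any totally looped graph constructed from E_sf via some finite step-by-step process in which at each step one collapses at a regular vertex which is not the base of a loop. Then L_K(E) is Morita equivalent to the ring direct sum (Π_{i=1}^k K_i) ⊕ L_K(F), where each K_i ≅ K. -/

import Mathlib

/-!
The proof compares Leavitt path algebras through full corners.  If `S` is isomorphic to a corner
`ε R ε` with `R ε R = R`, then `M ↦ ε M` is an equivalence from `R`-modules to `S`-modules
(`FullCorner.morita`); it is shown to be fully faithful, and essentially surjective through the
coinduced modules `Hom_S(ε R, N)`.  Since a full corner stays a full corner after adding a common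
direct factor, all comparisons are made in the form `StableMorita R S`, that is, `T × R` and
`T × S` are Morita equivalent for every ring `T`; this relation is compatible with products.

Let `v` be a regular vertex of `E` which is not the base of a loop.  Sending a new edge `[x f]` to
the path `x f` defines a homomorphism from the algebra of the collapse at `v` into `L_K(E)`
(`Collapse.family`).  Its image is the corner at `1 - v` (`Collapse.corner_subset`), which is full
because `v` is the sum of `f f*` over the edges `f` emitted by `v`, each of which ends outside `v`.
For injectivity, `L_K(E)` is made to act on `R × (s⁻¹(v) → R)`, where `R` is the algebra of the
collapse, in such a way that the composite action of `R` is left multiplication on the first factor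
(`Collapse.repFamily`).  Hence collapses do not change the stable Morita class
(`Collapse.stableMorita`).

A source that is not a sink is eliminated by a collapse in which no new edges arise.  A source that
is also a sink is isolated, so that eliminating it splits off a factor `K`
(`LeavittPathAlgebra.nonempty_ringEquiv_isolated`).  As edges leaving a surviving vertex are never
deleted, the isolated vertices eliminated along a chain are exactly the sinks of `E` which do not
survive, and induction over the two chains concludes.
-/

/-! ## Finite directed graphs -/

structure FinGraph where
  V : Type
  E : Type
  [fintypeV : Fintype V]
  [fintypeE : Fintype E]
  [decEqV : DecidableEq V]
  [decEqE : DecidableEq E]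
  s : E → V
  r : E → V

attribute [instance] FinGraph.fintypeV FinGraph.fintypeE FinGraph.decEqV FinGraph.decEqE

namespace FinGraph

/-- A vertex is regular if it emits at least one edge. -/
def IsRegular (G : FinGraph) (v : G.V) : Prop := ∃ e : G.E, G.s e = v

/-- A sink emits no edges. -/
def IsSink (G : FinGraph) (v : G.V) : Prop := ∀ e : G.E, G.s e ≠ v

/-- A source receives no edges. -/
def IsSource (G : FinGraph) (v : G.V) : Prop := ∀ e : G.E, G.r e ≠ v

/-- A graph is totally looped if every regular vertex is the base of a loop. -/
def TotallyLooped (G : FinGraph) : Prop :=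
  ∀ v : G.V, G.IsRegular v → ∃ e : G.E, G.s e = v ∧ G.r e = v

/-- A set of vertices is hereditary if it is closed under ranges of edges emitted
from its elements (equivalently, under reachability by paths). -/
def Hereditary (G : FinGraph) (T : Finset G.V) : Prop :=
  ∀ e : G.E, G.s e ∈ T → G.r e ∈ T

/-- A set of vertices `H` is saturated if every regular vertex all of whose emitted
edges end in `H` belongs to `H`. -/
def Saturated (G : FinGraph) (H : Set G.V) : Prop :=
  ∀ v : G.V, G.IsRegular v → (∀ e : G.E, G.s e = v → G.r e ∈ H) → v ∈ H

/-- The trivial graph: one vertex, no edges. -/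
def IsTrivial (G : FinGraph) : Prop :=
  Nonempty G.V ∧ Subsingleton G.V ∧ IsEmpty G.E

/-- A graph is source-free if every vertex receives at least one edge. -/
def IsSourceFree (G : FinGraph) : Prop := ∀ v : G.V, ∃ e : G.E, G.r e = v

/-- The graph with `k` vertices and no edges. -/
def discrete (k : ℕ) : FinGraph where
  V := Fin k
  E := Empty
  s := Empty.elim
  r := Empty.elim

/-- The straight line graph `A_n` with `n` vertices `v_0, …, v_{n-1}` and
edges `v_{i+1} → v_i` for `0 ≤ i ≤ n-2`. -/
def line (n : ℕ) : FinGraph where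
  V := Fin n
  E := Fin (n - 1)
  s := fun i => ⟨i.1 + 1, by have := i.isLt; omega⟩
  r := fun i => ⟨i.1, by have := i.isLt; omega⟩

/-- Disjoint union of two graphs. -/
def disjUnion (G H : FinGraph) : FinGraph where
  V := G.V ⊕ H.V
  E := G.E ⊕ H.E
  s := Sum.map G.s H.s
  r := Sum.map G.r H.r

/-- The restriction graph of `G` to a hereditary set `T` of vertices. -/
def restrict (G : FinGraph) (T : Finset G.V) (hT : G.Hereditary T) : FinGraph where
  V := {v : G.V // v ∈ T}
  E := {e : G.E // G.s e ∈ T}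
  s := fun e => ⟨G.s e.1, e.2⟩
  r := fun e => ⟨G.r e.1, hT e.1 e.2⟩

/-- The "strands of hair" extension `F⁺(n)` of `F`:  at each vertex `v` a strand
`v^{n v - 1} → ⋯ → v^1 → v` of length `n v - 1` is attached. -/
def hairExtension (F : FinGraph) (n : F.V → ℕ) : FinGraph where
  V := F.V ⊕ (Σ v : F.V, Fin (n v - 1))
  E := F.E ⊕ (Σ v : F.V, Fin (n v - 1))
  s := Sum.elim (fun e => Sum.inl (F.s e)) (fun p => Sum.inr p)
  r := Sum.elim (fun e => Sum.inl (F.r e))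
    (fun p => if h : (p.2 : ℕ) = 0 then Sum.inl p.1
      else Sum.inr ⟨p.1, ⟨(p.2 : ℕ) - 1, by have := p.2.isLt; omega⟩⟩)

/-- The "Move (R)" graph at a vertex `w` which emits precisely one edge `f`
which is not a loop: `w` is removed, and each edge `e` into `w` is replaced by
an edge `[ef]` from `s e` to `r f`. -/
def moveR (E : FinGraph) (w : E.V) (f : E.E)
    (hsf : E.s f = w) (huniq : ∀ e : E.E, E.s e = w → e = f) (hnl : E.r f ≠ w) : FinGraph where
  V := {v : E.V // v ≠ w}
  E := {e : E.E // E.r e ≠ w ∧ e ≠ f} ⊕ {e : E.E // E.r e = w}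
  s := Sum.elim
    (fun e => ⟨E.s e.1, fun h => e.2.2 (huniq e.1 h)⟩)
    (fun e => ⟨E.s e.1, fun h => hnl ((huniq e.1 h) ▸ e.2)⟩)
  r := Sum.elim
    (fun e => ⟨E.r e.1, e.2.1⟩)
    (fun _ => ⟨E.r f, hnl⟩)

/-- The collapse of `E` at a vertex `v` which is not the base of a loop:
`v` is removed, and for every `e ∈ r⁻¹(v)` and `f ∈ s⁻¹(v)` an edge `[ef]`
from `s e` to `r f` is added. -/
def collapse (E : FinGraph) (v : E.V)
    (hnl : ∀ e : E.E, E.s e = v → E.r e ≠ v) : FinGraph where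
  V := {u : E.V // u ≠ v}
  E := {e : E.E // E.r e ≠ v ∧ E.s e ≠ v} ⊕ ({e : E.E // E.r e = v} × {f : E.E // E.s f = v})
  s := Sum.elim
    (fun e => ⟨E.s e.1, e.2.2⟩)
    (fun p => ⟨E.s p.1.1, fun h => (hnl p.1.1 h) p.1.2⟩)
  r := Sum.elim
    (fun e => ⟨E.r e.1, e.2.1⟩)
    (fun p => ⟨E.r p.2.1, hnl p.2.1 p.2.2⟩)

/-- The in-split graph of `E` at a vertex `v`, with respect to a partition of
`r⁻¹(v)` into `n` classes (encoded as a surjection `P : r⁻¹(v) → Fin n`). -/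
def inSplit (E : FinGraph) (v : E.V) (n : ℕ) (P : {e : E.E // E.r e = v} → Fin n) : FinGraph where
  V := {u : E.V // u ≠ v} ⊕ Fin n
  E := ({e : E.E // E.s e = v} × Fin n) ⊕ {f : E.E // E.s f ≠ v}
  s := Sum.elim (fun x => Sum.inr x.2) (fun f => Sum.inl ⟨E.s f.1, f.2⟩)
  r := Sum.elim
    (fun x => if h : E.r x.1.1 = v then Sum.inr (P ⟨x.1.1, h⟩) else Sum.inl ⟨E.r x.1.1, h⟩)
    (fun f => if h : E.r f.1 = v then Sum.inr (P ⟨f.1, h⟩) else Sum.inl ⟨E.r f.1, h⟩)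

/-- The out-split graph of `E` at a vertex `v`, with respect to a partition of
`s⁻¹(v)` into `n` classes (encoded as a surjection `P : s⁻¹(v) → Fin n`). -/
def outSplit (E : FinGraph) (v : E.V) (n : ℕ) (P : {e : E.E // E.s e = v} → Fin n) : FinGraph where
  V := {u : E.V // u ≠ v} ⊕ Fin n
  E := ({e : E.E // E.r e = v} × Fin n) ⊕ {f : E.E // E.r f ≠ v}
  r := Sum.elim (fun x => Sum.inr x.2) (fun f => Sum.inl ⟨E.r f.1, f.2⟩)
  s := Sum.elim
    (fun x => if h : E.s x.1.1 = v then Sum.inr (P ⟨x.1.1, h⟩) else Sum.inl ⟨E.s x.1.1, h⟩)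
    (fun f => if h : E.s f.1 = v then Sum.inr (P ⟨f.1, h⟩) else Sum.inl ⟨E.s f.1, h⟩)

/-- The source elimination graph `E \ v` at a source `v`. -/
def sourceElim (E : FinGraph) (v : E.V) (hsrc : E.IsSource v) : FinGraph where
  V := {u : E.V // u ≠ v}
  E := {e : E.E // E.s e ≠ v}
  s := fun e => ⟨E.s e.1, e.2⟩
  r := fun e => ⟨E.r e.1, fun h => hsrc e.1 h⟩

/-- A chain of source eliminations starting at `E`. -/
inductive ElimChain (E : FinGraph) : FinGraph → Type 1
  | refl : ElimChain E E
  | step {H : FinGraph} (c : ElimChain E H) (v : H.V) (hsrc : H.IsSource v) :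
      ElimChain E (H.sourceElim v hsrc)

/-- The canonical (injective) map from the vertices of the final graph of a
source elimination chain back into the vertices of the initial graph. -/
def ElimChain.vmap {E : FinGraph} : {F : FinGraph} → ElimChain E F → F.V → E.V
  | _, .refl, u => u
  | _, .step c _ _, u => c.vmap u.1

/-- A chain of collapses, each performed at a regular vertex which is not the
base of a loop. -/
inductive CollapseChain (E : FinGraph) : FinGraph → Prop
  | refl : CollapseChain E E
  | step {H : FinGraph} (c : CollapseChain E H) (v : H.V) (hreg : H.IsRegular v)
      (hnl : ∀ e : H.E, H.s e = v → H.r e ≠ v) :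
      CollapseChain E (H.collapse v hnl)

end FinGraph

/-! ## Leavitt path algebras -/

/-- Generators of the Leavitt path algebra: vertices, edges, and ghost edges. -/
inductive LPAGen (G : FinGraph) : Type
  | vert : G.V → LPAGen G
  | edge : G.E → LPAGen G
  | ghost : G.E → LPAGen G

/-- The defining relations of the Leavitt path algebra of a finite graph. -/
inductive LeavittRel (K : Type) [Field K] (G : FinGraph) :
    FreeAlgebra K (LPAGen G) → FreeAlgebra K (LPAGen G) → Prop
  | vertMul (v w : G.V) :
      LeavittRel K G (FreeAlgebra.ι K (LPAGen.vert v) * FreeAlgebra.ι K (LPAGen.vert w))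
        (if v = w then FreeAlgebra.ι K (LPAGen.vert v) else 0)
  | edgeLeft (e : G.E) :
      LeavittRel K G (FreeAlgebra.ι K (LPAGen.vert (G.s e)) * FreeAlgebra.ι K (LPAGen.edge e))
        (FreeAlgebra.ι K (LPAGen.edge e))
  | edgeRight (e : G.E) :
      LeavittRel K G (FreeAlgebra.ι K (LPAGen.edge e) * FreeAlgebra.ι K (LPAGen.vert (G.r e)))
        (FreeAlgebra.ι K (LPAGen.edge e))
  | ghostLeft (e : G.E) :
      LeavittRel K G (FreeAlgebra.ι K (LPAGen.vert (G.r e)) * FreeAlgebra.ι K (LPAGen.ghost e))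
        (FreeAlgebra.ι K (LPAGen.ghost e))
  | ghostRight (e : G.E) :
      LeavittRel K G (FreeAlgebra.ι K (LPAGen.ghost e) * FreeAlgebra.ι K (LPAGen.vert (G.s e)))
        (FreeAlgebra.ι K (LPAGen.ghost e))
  | ghostEdge (e f : G.E) :
      LeavittRel K G (FreeAlgebra.ι K (LPAGen.ghost e) * FreeAlgebra.ι K (LPAGen.edge f))
        (if e = f then FreeAlgebra.ι K (LPAGen.vert (G.r e)) else 0)
  | cuntzKrieger (v : G.V) (hv : G.IsRegular v) :
      LeavittRel K G (FreeAlgebra.ι K (LPAGen.vert v))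
        (∑ e ∈ Finset.univ.filter (fun e : G.E => G.s e = v),
          FreeAlgebra.ι K (LPAGen.edge e) * FreeAlgebra.ι K (LPAGen.ghost e))
  | unit :
      LeavittRel K G 1 (∑ v : G.V, FreeAlgebra.ι K (LPAGen.vert v))

/-- The Leavitt path algebra `L_K(G)` of a finite graph `G` with coefficients in
a field `K`. -/
abbrev LeavittPathAlgebra (K : Type) [Field K] (G : FinGraph) : Type :=
  RingQuot (LeavittRel K G)

namespace LeavittPathAlgebra

variable (K : Type) [Field K] (G : FinGraph)

/-- The image of a vertex in the Leavitt path algebra. -/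
def vert (v : G.V) : LeavittPathAlgebra K G :=
  RingQuot.mkAlgHom K (LeavittRel K G) (FreeAlgebra.ι K (LPAGen.vert v))

/-- The image of an edge in the Leavitt path algebra. -/
def edge (e : G.E) : LeavittPathAlgebra K G :=
  RingQuot.mkAlgHom K (LeavittRel K G) (FreeAlgebra.ι K (LPAGen.edge e))

/-- The image of a ghost edge in the Leavitt path algebra. -/
def ghost (e : G.E) : LeavittPathAlgebra K G :=
  RingQuot.mkAlgHom K (LeavittRel K G) (FreeAlgebra.ι K (LPAGen.ghost e))

end LeavittPathAlgebra

/-! ## Ring-theoretic notions -/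

/-- Two unital rings are Morita equivalent if their categories of left modules
are equivalent. -/
def MoritaEquivalent (R S : Type) [Ring R] [Ring S] : Prop :=
  Nonempty (ModuleCat.{0} R ≌ ModuleCat.{0} S)

/-- An idempotent `e` of a ring `R` is full if `R e R = R`, i.e. `1` is a finite
sum of elements of the form `a * e * b`. -/
def IsFullIdempotent {R : Type} [Ring R] (e : R) : Prop :=
  IsIdempotentElem e ∧ ∃ (n : ℕ) (a b : Fin n → R), (∑ i, a i * e * b i) = 1

/-- `S` is isomorphic, as a (nonunital) `K`-algebra, to the corner ring
`ε R ε = {x : R | ε * x * ε = x}` of `R`. -/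
def IsCornerIso (K : Type) [Field K] (S R : Type) [Ring S] [Ring R]
    [Algebra K S] [Algebra K R] (ε : R) : Prop :=
  ∃ φ : S →ₙₐ[K] R, Function.Injective φ ∧ Set.range φ = {x : R | ε * x * ε = x}

/-- A module `Q` is a generator for the category of left `R`-modules iff `R` is
an epimorphic image (equivalently, a direct summand) of a finite direct sum of
copies of `Q`. -/
def IsGenerator (R Q : Type) [Ring R] [AddCommGroup Q] [Module R Q] : Prop :=
  ∃ (n : ℕ) (f : (Fin n → Q) →ₗ[R] R), Function.Surjective f

/-! ### Morita equivalence of full corners -/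

/-- `S` is a full corner of `R`: a non-unital embedding `φ` identifies `S` with `ε R ε`
for the idempotent `ε = φ 1`, and `R ε R = R`. -/
def FullCorner (S R : Type) [Ring S] [Ring R] : Prop :=
  ∃ φ : S →ₙ+* R, Function.Injective φ ∧ (∀ x, ∃ y, φ y = φ 1 * x * φ 1) ∧
    ∃ (ι : Type) (_ : Fintype ι) (a b : ι → R), ∑ i, a i * φ 1 * b i = 1

namespace Corner

open CategoryTheory

variable {S R : Type} [Ring S] [Ring R] (φ : S →ₙ+* R)

/-- The subgroup `ε M` of an `R`-module `M`, where `ε = φ 1`. -/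
def sub (M : Type) [AddCommGroup M] [Module R M] : AddSubgroup M where
  carrier := {m | φ 1 • m = m}
  zero_mem' := smul_zero _
  add_mem' := by
    intro a b ha hb
    simp only [Set.mem_ofPred_eq] at *
    rw [smul_add, ha, hb]
  neg_mem' := by
    intro a ha
    simp only [Set.mem_ofPred_eq] at *
    rw [smul_neg, ha]

lemma eps_smul {M : Type} [AddCommGroup M] [Module R M] (m : sub φ M) :
    φ 1 • m.1 = m.1 := m.2

lemma mem_sub {M : Type} [AddCommGroup M] [Module R M] (s : S) (m : M) :
    φ s • m ∈ sub φ M := by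
  change φ 1 • φ s • m = φ s • m
  rw [smul_smul, ← map_mul, one_mul]

/-- `S` acts on `ε M` through `φ`; the action is unital because `φ 1 = ε`. -/
instance subModule (M : Type) [AddCommGroup M] [Module R M] : Module S (sub φ M) where
  smul s m := ⟨φ s • (m : M), mem_sub φ s m.1⟩
  one_smul m := Subtype.ext m.2
  mul_smul a b m := Subtype.ext (by
    change φ (a * b) • (m : M) = φ a • φ b • (m : M)
    rw [map_mul, mul_smul])
  smul_zero a := Subtype.ext (smul_zero _)
  smul_add a x y := Subtype.ext (smul_add _ _ _)
  add_smul a b m := Subtype.ext (by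
    change φ (a + b) • (m : M) = φ a • (m : M) + φ b • (m : M)
    rw [map_add, add_smul])
  zero_smul m := Subtype.ext (by
    change φ 0 • (m : M) = 0
    rw [map_zero, zero_smul])

@[simp] lemma coe_smul {M : Type} [AddCommGroup M] [Module R M] (s : S) (m : sub φ M) :
    ((s • m : sub φ M) : M) = φ s • (m : M) := rfl

/-- The restriction of an `R`-linear map to `ε M → ε N`. -/
def subMap {M N : Type} [AddCommGroup M] [Module R M] [AddCommGroup N] [Module R N]
    (g : M →ₗ[R] N) : sub φ M →ₗ[S] sub φ N where
  toFun m := ⟨g m, by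
    change φ 1 • g m.1 = g m.1
    rw [← map_smul, eps_smul]⟩
  map_add' a b := Subtype.ext (by simp)
  map_smul' s m := Subtype.ext (by simp)

@[simp] lemma coe_subMap {M N : Type} [AddCommGroup M] [Module R M] [AddCommGroup N] [Module R N]
    (g : M →ₗ[R] N) (m : sub φ M) : (subMap φ g m : N) = g m := rfl

/-- The functor `M ↦ ε M`. -/
def functor : ModuleCat.{0} R ⥤ ModuleCat.{0} S where
  obj M := ModuleCat.of S (sub φ M)
  map g := ModuleCat.ofHom (subMap φ g.hom)
  map_id M := by ext m; rfl
  map_comp f g := by ext m; rfl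

variable {φ}

lemma subMap_injective {ι : Type} [Fintype ι] {a b : ι → R} (hab : ∑ i, a i * φ 1 * b i = 1)
    {M N : Type} [AddCommGroup M] [Module R M] [AddCommGroup N] [Module R N] :
    Function.Injective (subMap φ : (M →ₗ[R] N) → _) := by
  intro g h hgh
  ext m
  have key : ∀ i, g (φ 1 • b i • m) = h (φ 1 • b i • m) := fun i => by
    have := congrArg (fun t => ((t ⟨φ 1 • b i • m, mem_sub φ 1 _⟩ : sub φ N) : N)) hgh
    simpa using this
  have hm : m = ∑ i, a i • φ 1 • b i • m := by
    simp only [smul_smul, ← Finset.sum_smul, ← mul_assoc]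
    rw [hab, one_smul]
  rw [hm, map_sum, map_sum]
  exact Finset.sum_congr rfl fun i _ => by
    rw [LinearMap.map_smul g (a i), LinearMap.map_smul h (a i), key]

/-- The extension of `h : ε M → ε N` is `m ↦ ∑ aᵢ h (ε bᵢ m)`. -/
lemma subMap_surjective {ι : Type} [Fintype ι] {a b : ι → R} (hab : ∑ i, a i * φ 1 * b i = 1)
    (hφ : ∀ x, ∃ y, φ y = φ 1 * x * φ 1)
    {M N : Type} [AddCommGroup M] [Module R M] [AddCommGroup N] [Module R N] :
    Function.Surjective (subMap φ : (M →ₗ[R] N) → _) := by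
  intro h
  have hε : φ 1 * φ 1 = φ 1 := by rw [← map_mul, one_mul]
  let c : R → M → sub φ M := fun x m => ⟨φ 1 • x • m, mem_sub φ 1 _⟩
  have cadd : ∀ x m n, c x (m + n) = c x m + c x n := fun x m n =>
    Subtype.ext (by simp [c])
  have hc : ∀ (x : R) (m : sub φ M), (h (c x m) : N) = φ 1 • x • (h m : N) := by
    intro x m
    obtain ⟨y, hy⟩ := hφ x
    have h1 : c x m = y • m := Subtype.ext (by
      simp only [c, coe_smul, hy, mul_smul, eps_smul])
    rw [h1, map_smul, coe_smul, hy, mul_smul, mul_smul, eps_smul]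
  have hm : ∀ m : M, m = ∑ i, a i • (c (b i) m : M) := fun m => by
    simp only [c, smul_smul, ← Finset.sum_smul, ← mul_assoc]
    rw [hab, one_smul]
  have hn : ∀ m : N, ∑ i, a i • φ 1 • b i • m = m := fun m => by
    simp only [smul_smul, ← Finset.sum_smul, ← mul_assoc]
    rw [hab, one_smul]
  have csum : ∀ (x : R) (m : M), c x m = ∑ j, c (x * a j) (c (b j) m : M) := fun x m => by
    apply Subtype.ext
    conv_lhs => simp only [c]; rw [hm m]
    simp only [AddSubgroup.val_finsetSum, Finset.smul_sum, c, smul_smul, mul_assoc]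
  let g : M →ₗ[R] N :=
    { toFun := fun m => ∑ i, a i • (h (c (b i) m) : N)
      map_add' := fun m n => by
        simp only [cadd, map_add, AddSubgroup.coe_add, smul_add, Finset.sum_add_distrib]
      map_smul' := fun r m => by
        have h2 : ∀ i, (h (c (b i) (r • m)) : N)
            = φ 1 • b i • ∑ j, r • a j • (h (c (b j) m) : N) := fun i => by
          have : c (b i) (r • m) = c (b i * r) m := Subtype.ext (by simp [c, smul_smul])
          rw [this, csum, map_sum, AddSubgroup.val_finsetSum]
          simp only [hc, Finset.smul_sum, smul_smul, mul_assoc]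
        simp only [h2, hn, RingHom.id_apply]
        rw [Finset.smul_sum] }
  refine ⟨g, ?_⟩
  ext m
  change ∑ i, a i • (h (c (b i) m) : N) = h m
  simp only [hc, hn]

variable (φ)

/-- The coinduced module `Hom_S(ε R, N)` of an `S`-module `N`. -/
def Coind (N : Type) [AddCommGroup N] [Module S N] : Type := sub φ R →ₗ[S] N

instance (N : Type) [AddCommGroup N] [Module S N] : AddCommGroup (Coind φ N) :=
  inferInstanceAs (AddCommGroup (sub φ R →ₗ[S] N))

/-- The linear map underlying an element of the coinduced module. -/
def Coind.lin {φ : S →ₙ+* R} {N : Type} [AddCommGroup N] [Module S N] (h : Coind φ N) :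
    sub φ R →ₗ[S] N := h

/-- Right multiplication by `r` as an `R`-linear endomorphism of `R`. -/
def rmul (r : R) : R →ₗ[R] R where
  toFun x := x * r
  map_add' a b := add_mul a b r
  map_smul' a b := mul_assoc a b r

/-- `R` acts on `Hom_S(ε R, N)` by `(r • h) x = h (x r)`. -/
instance (N : Type) [AddCommGroup N] [Module S N] : Module R (Coind φ N) where
  smul r h := LinearMap.comp h.lin (subMap φ (rmul r))
  one_smul h := LinearMap.ext fun _ => congrArg h.lin (Subtype.ext (mul_one _))
  mul_smul _ _ h := LinearMap.ext fun _ => congrArg h.lin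
    (Subtype.ext (mul_assoc _ _ _).symm)
  smul_zero _ := LinearMap.ext fun _ => rfl
  smul_add _ _ _ := LinearMap.ext fun _ => rfl
  add_smul _ _ h := LinearMap.ext fun _ => (congrArg h.lin
    (Subtype.ext (mul_add _ _ _))).trans (map_add h.lin _ _)
  zero_smul h := LinearMap.ext fun _ => (congrArg h.lin
    (Subtype.ext (mul_zero _))).trans (map_zero h.lin)

/-- The idempotent `ε` as an element of `ε R`. -/
def eps : sub φ R := ⟨φ 1, by
  change φ 1 * φ 1 = φ 1
  rw [← map_mul, one_mul]⟩

variable {φ}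

/-- Evaluation at `ε` identifies `ε Hom_S(ε R, N)` with `N`. -/
lemma exists_coindEquiv (hinj : Function.Injective φ) (hφ : ∀ x, ∃ y, φ y = φ 1 * x * φ 1)
    (N : Type) [AddCommGroup N] [Module S N] :
    Nonempty (sub φ (Coind φ N) ≃ₗ[S] N) := by
  let ev : sub φ (Coind φ N) →ₗ[S] N :=
    { toFun := fun h => h.1.lin (eps φ)
      map_add' := fun a b => rfl
      map_smul' := fun s h => by
        change h.1.lin (subMap φ (rmul (φ s)) (eps φ)) = s • _
        rw [← map_smul]
        congr 1
        apply Subtype.ext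
        change φ 1 * φ s = φ s * φ 1
        rw [← map_mul, ← map_mul, one_mul, mul_one] }
  choose y hy using hφ
  have hx : ∀ x : sub φ R, φ (y x) = (x : R) * φ 1 := fun x => by
    rw [hy]; congr 1; exact x.2
  have hy' : ∀ x : sub φ R, subMap φ (rmul (φ 1)) x = y x • eps φ := fun x => by
    apply Subtype.ext
    change (x : R) * φ 1 = φ (y x) * φ 1
    rw [hx, mul_assoc, ← map_mul, one_mul]
  refine ⟨LinearEquiv.ofBijective ev ⟨?_, ?_⟩⟩
  · rw [injective_iff_map_eq_zero]
    intro h hh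
    apply Subtype.ext
    refine LinearMap.ext fun x => ?_
    have h2 : h.1.lin x = h.1.lin (subMap φ (rmul (φ 1)) x) :=
      (congrArg (fun t : Coind φ N => t.lin x) (show φ 1 • h.1 = h.1 from h.2)).symm
    change h.1.lin x = 0
    rw [h2, hy', map_smul]
    change y x • ev h = 0
    rw [hh, smul_zero]
  · intro n
    let h : sub φ R →ₗ[S] N :=
      { toFun := fun x => y x • n
        map_add' := fun a b => by
          rw [← add_smul]
          congr 1
          apply hinj
          rw [map_add, hx, hx, hx, AddSubgroup.coe_add, add_mul]
        map_smul' := fun s a => by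
          rw [RingHom.id_apply, smul_smul]
          congr 1
          apply hinj
          rw [map_mul, hx, hx, coe_smul, smul_eq_mul, mul_assoc] }
    have hy1 : ∀ x : sub φ R, y (subMap φ (rmul (φ 1)) x) = y x := fun x => by
      apply hinj
      rw [hx, hx]
      change (x : R) * φ 1 * φ 1 = _
      rw [mul_assoc, ← map_mul, one_mul]
    refine ⟨⟨h, LinearMap.ext fun x => congrArg (· • n) (hy1 x)⟩, ?_⟩
    change y (eps φ) • n = n
    have : y (eps φ) = 1 := by
      apply hinj
      rw [hx]
      change φ 1 * φ 1 = _
      rw [← map_mul, one_mul]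
    rw [this, one_smul]

end Corner

open CategoryTheory in
lemma FullCorner.morita {S R : Type} [Ring S] [Ring R] (h : FullCorner S R) :
    MoritaEquivalent R S := by
  obtain ⟨φ, hinj, hφ, ι, _, a, b, hab⟩ := h
  have h1 : (Corner.functor φ).Faithful := ⟨by
    intro M N f g hfg
    ext1
    exact Corner.subMap_injective hab (congrArg ModuleCat.Hom.hom hfg)⟩
  have h2 : (Corner.functor φ).Full := ⟨by
    intro M N f
    obtain ⟨g, hg⟩ := Corner.subMap_surjective hab hφ f.hom
    exact ⟨ModuleCat.ofHom g, by ext1; exact hg⟩⟩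
  have h3 : (Corner.functor φ).EssSurj := ⟨fun N =>
    ⟨ModuleCat.of R (Corner.Coind φ N),
      ⟨(Corner.exists_coindEquiv hinj hφ N).some.toModuleIso⟩⟩⟩
  have : (Corner.functor φ).IsEquivalence := {}
  exact ⟨(Corner.functor φ).asEquivalence⟩

/-- `T × R` and `T × S` are Morita equivalent for every ring `T`. Quantifying over `T` makes
the relation visibly stable under adding a direct factor. -/
def StableMorita (R S : Type) [Ring R] [Ring S] : Prop :=
  ∀ (T : Type) [Ring T], MoritaEquivalent (T × R) (T × S)

/-- Associativity of the product of rings. -/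
def prodAssocRing (R S T : Type) [Ring R] [Ring S] [Ring T] : (R × S) × T ≃+* R × (S × T) where
  toEquiv := Equiv.prodAssoc R S T
  map_mul' _ _ := rfl
  map_add' _ _ := rfl

lemma MoritaEquivalent.of_ringEquiv {R S : Type} [Ring R] [Ring S] (e : R ≃+* S) :
    MoritaEquivalent R S :=
  ⟨(ModuleCat.restrictScalarsEquivalenceOfRingEquiv e).symm⟩

lemma MoritaEquivalent.trans {R S T : Type} [Ring R] [Ring S] [Ring T]
    (h : MoritaEquivalent R S) (h' : MoritaEquivalent S T) : MoritaEquivalent R T :=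
  ⟨h.some.trans h'.some⟩

lemma StableMorita.of_ringEquiv {R S : Type} [Ring R] [Ring S] (e : R ≃+* S) :
    StableMorita R S := fun T _ =>
  .of_ringEquiv (RingEquiv.prodCongr (RingEquiv.refl T) e)

lemma StableMorita.trans {R S T : Type} [Ring R] [Ring S] [Ring T]
    (h : StableMorita R S) (h' : StableMorita S T) : StableMorita R T :=
  fun T _ => (h T).trans (h' T)

lemma StableMorita.prod {R S : Type} [Ring R] [Ring S] (h : StableMorita R S)
    (T : Type) [Ring T] : StableMorita (T × R) (T × S) := fun U _ =>
  ((MoritaEquivalent.of_ringEquiv (prodAssocRing U T R).symm).trans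
    (h (U × T))).trans (.of_ringEquiv (prodAssocRing U T S))

lemma StableMorita.morita {R S : Type} [Ring R] [Ring S] (h : StableMorita R S) :
    MoritaEquivalent R S :=
  ((MoritaEquivalent.of_ringEquiv (RingEquiv.zeroRingProd R PUnit)).trans (h PUnit)).trans
    (.of_ringEquiv (RingEquiv.zeroRingProd S PUnit).symm)

/-- If `S ≅ ε R ε` is a full corner of `R`, then `T × S` is the full corner of `T × R`
at the idempotent `(1, ε)`. -/
lemma FullCorner.stableMorita {S R : Type} [Ring S] [Ring R] (h : FullCorner S R) :
    StableMorita R S := by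
  intro T _
  obtain ⟨φ, hinj, hφ, ι, _, a, b, hab⟩ := h
  refine FullCorner.morita ⟨(NonUnitalRingHom.id T).prodMap φ, ?_, ?_, ?_⟩
  · rintro ⟨t, x⟩ ⟨t', x'⟩ hx
    obtain ⟨h1, h2⟩ := Prod.mk.inj hx
    exact Prod.ext h1 (hinj h2)
  · rintro ⟨t, x⟩
    obtain ⟨y, hy⟩ := hφ x
    exact ⟨(t, y), Prod.ext (by simp) (by simpa using hy)⟩
  · refine ⟨Option ι, inferInstance, fun i => i.elim (1, 0) fun i => (0, a i),
      fun i => i.elim (1, 0) fun i => (0, b i), ?_⟩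
    rw [Fintype.sum_option]
    ext
    · simp [Prod.fst_sum]
    · simpa [Prod.snd_sum] using hab

/-! ### Leavitt families and the universal property -/

/-- Elements of a `K`-algebra satisfying the defining relations of `L_K(G)`, except that the
vertices are not required to sum to `1`. -/
structure LeavittFamily (K : Type) [Field K] (G : FinGraph) (A : Type) [Ring A] [Algebra K A] where
  p : G.V → A
  e : G.E → A
  g : G.E → A
  p_mul_p : ∀ v w, p v * p w = if v = w then p v else 0
  p_mul_e : ∀ x, p (G.s x) * e x = e x
  e_mul_p : ∀ x, e x * p (G.r x) = e x
  p_mul_g : ∀ x, p (G.r x) * g x = g x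
  g_mul_p : ∀ x, g x * p (G.s x) = g x
  g_mul_e : ∀ x y, g x * e y = if x = y then p (G.r x) else 0
  ck : ∀ v, G.IsRegular v → p v = ∑ x, if G.s x = v then e x * g x else 0

namespace LeavittPathAlgebra

section basic

variable (K : Type) [Field K] (G : FinGraph)

lemma sum_vert : ∑ v, vert K G v = 1 := by
  have := RingQuot.mkAlgHom_rel K (LeavittRel.unit (K := K) (G := G))
  rw [map_one, map_sum] at this
  exact this.symm

/-- The tautological Leavitt family of generators of `L_K(G)`. -/
def family : LeavittFamily K G (LeavittPathAlgebra K G) where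
  p := vert K G
  e := edge K G
  g := ghost K G
  p_mul_p v w := by
    have := RingQuot.mkAlgHom_rel K (LeavittRel.vertMul (K := K) (G := G) v w)
    rw [map_mul, apply_ite (RingQuot.mkAlgHom K _), map_zero] at this
    exact this
  p_mul_e x := by
    have := RingQuot.mkAlgHom_rel K (LeavittRel.edgeLeft (K := K) (G := G) x)
    rwa [map_mul] at this
  e_mul_p x := by
    have := RingQuot.mkAlgHom_rel K (LeavittRel.edgeRight (K := K) (G := G) x)
    rwa [map_mul] at this
  p_mul_g x := by
    have := RingQuot.mkAlgHom_rel K (LeavittRel.ghostLeft (K := K) (G := G) x)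
    rwa [map_mul] at this
  g_mul_p x := by
    have := RingQuot.mkAlgHom_rel K (LeavittRel.ghostRight (K := K) (G := G) x)
    rwa [map_mul] at this
  g_mul_e x y := by
    have := RingQuot.mkAlgHom_rel K (LeavittRel.ghostEdge (K := K) (G := G) x y)
    rw [map_mul, apply_ite (RingQuot.mkAlgHom K _), map_zero] at this
    exact this
  ck v hv := by
    have := RingQuot.mkAlgHom_rel K (LeavittRel.cuntzKrieger (K := K) (G := G) v hv)
    rw [map_sum, Finset.sum_filter] at this
    simp only [map_mul] at this
    exact this

lemma vert_mul_vert (v w : G.V) :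
    vert K G v * vert K G w = if v = w then vert K G v else 0 := (family K G).p_mul_p v w

lemma vert_mul_edge (v : G.V) (x : G.E) :
    vert K G v * edge K G x = if v = G.s x then edge K G x else 0 := by
  rw [← show _ = edge K G x from (family K G).p_mul_e x, ← mul_assoc]
  change vert K G v * vert K G _ * edge K G x = if v = G.s x then vert K G _ * edge K G x else 0
  rw [vert_mul_vert]
  split_ifs with h
  · rw [h]
  · rw [zero_mul]

lemma edge_mul_vert (v : G.V) (x : G.E) :
    edge K G x * vert K G v = if G.r x = v then edge K G x else 0 := by
  rw [← show _ = edge K G x from (family K G).e_mul_p x, mul_assoc]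
  change edge K G x * (vert K G _ * vert K G v) = if G.r x = v then edge K G x * vert K G _ else 0
  rw [vert_mul_vert]
  split_ifs with h
  · rfl
  · rw [mul_zero]

lemma vert_mul_ghost (v : G.V) (x : G.E) :
    vert K G v * ghost K G x = if v = G.r x then ghost K G x else 0 := by
  rw [← show _ = ghost K G x from (family K G).p_mul_g x, ← mul_assoc]
  change vert K G v * vert K G _ * ghost K G x = if v = G.r x then vert K G _ * ghost K G x else 0
  rw [vert_mul_vert]
  split_ifs with h
  · rw [h]
  · rw [zero_mul]

lemma ghost_mul_vert (v : G.V) (x : G.E) :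
    ghost K G x * vert K G v = if G.s x = v then ghost K G x else 0 := by
  rw [← show _ = ghost K G x from (family K G).g_mul_p x, mul_assoc]
  change ghost K G x * (vert K G _ * vert K G v) =
    if G.s x = v then ghost K G x * vert K G _ else 0
  rw [vert_mul_vert]
  split_ifs with h
  · rfl
  · rw [mul_zero]

lemma ghost_mul_edge (x y : G.E) :
    ghost K G x * edge K G y = if x = y then vert K G (G.r x) else 0 := (family K G).g_mul_e x y

lemma edge_mul_edge (x y : G.E) (h : G.r x ≠ G.s y) : edge K G x * edge K G y = 0 := by
  rw [← show _ = edge K G x from (family K G).e_mul_p x, mul_assoc]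
  change edge K G x * (vert K G _ * edge K G y) = 0
  rw [vert_mul_edge, if_neg h, mul_zero]

lemma ghost_mul_ghost (x y : G.E) (h : G.s x ≠ G.r y) : ghost K G x * ghost K G y = 0 := by
  rw [← show _ = ghost K G x from (family K G).g_mul_p x, mul_assoc]
  change ghost K G x * (vert K G _ * ghost K G y) = 0
  rw [vert_mul_ghost, if_neg h, mul_zero]

lemma vert_eq_sum (v : G.V) (hv : G.IsRegular v) :
    vert K G v = ∑ x, if G.s x = v then edge K G x * ghost K G x else 0 := (family K G).ck v hv

end basic

variable {K : Type} [Field K] {G : FinGraph}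

/-- Induction over the generators; the unit needs no separate case, being the sum of the
vertices. -/
lemma induction {P : LeavittPathAlgebra K G → Prop} (zero : P 0)
    (vert : ∀ v, P (vert K G v)) (edge : ∀ x, P (edge K G x)) (ghost : ∀ x, P (ghost K G x))
    (add : ∀ x y, P x → P y → P (x + y)) (mul : ∀ x y, P x → P y → P (x * y))
    (smul : ∀ (c : K) x, P x → P (c • x)) (x : LeavittPathAlgebra K G) : P x := by
  obtain ⟨x, rfl⟩ := RingQuot.mkAlgHom_surjective K (LeavittRel K G) x
  induction x with
  | grade0 c =>
    rw [AlgHom.commutes, Algebra.algebraMap_eq_smul_one, ← sum_vert K G]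
    exact smul _ _ (Finset.sum_induction _ P add zero fun v _ => vert v)
  | grade1 x =>
    cases x with
    | vert v => exact vert v
    | edge x => exact edge x
    | ghost x => exact ghost x
  | mul a b ha hb => rw [map_mul]; exact mul _ _ ha hb
  | add a b ha hb => rw [map_add]; exact add _ _ ha hb

lemma hom_ext {A : Type} [Ring A] [Algebra K A] {f h : LeavittPathAlgebra K G →ₙₐ[K] A}
    (hv : ∀ v, f (vert K G v) = h (vert K G v)) (he : ∀ x, f (edge K G x) = h (edge K G x))
    (hg : ∀ x, f (ghost K G x) = h (ghost K G x)) : f = h := by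
  ext x
  induction x using induction with
  | zero => simp
  | vert v => exact hv v
  | edge x => exact he x
  | ghost x => exact hg x
  | add a b ha hb => rw [map_add, map_add, ha, hb]
  | mul a b ha hb => rw [map_mul, map_mul, ha, hb]
  | smul c a ha => rw [map_smul, map_smul, ha]

/-- A Leavitt family in a unital algebra whose vertices sum to `1` induces a unital
homomorphism. -/
lemma exists_lift_unital {A : Type} [Ring A] [Algebra K A] (F : LeavittFamily K G A)
    (h1 : ∑ v, F.p v = 1) :
    ∃ f : LeavittPathAlgebra K G →ₐ[K] A, (∀ v, f (vert K G v) = F.p v) ∧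
      (∀ x, f (edge K G x) = F.e x) ∧ (∀ x, f (ghost K G x) = F.g x) := by
  let f₀ : FreeAlgebra K (LPAGen G) →ₐ[K] A := FreeAlgebra.lift K fun x => match x with
    | .vert v => F.p v
    | .edge x => F.e x
    | .ghost x => F.g x
  have hv : ∀ v, f₀ (FreeAlgebra.ι K (.vert v)) = F.p v := fun v => by simp [f₀]
  have he : ∀ v, f₀ (FreeAlgebra.ι K (.edge v)) = F.e v := fun v => by simp [f₀]
  have hg : ∀ v, f₀ (FreeAlgebra.ι K (.ghost v)) = F.g v := fun v => by simp [f₀]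
  have hrel : ∀ ⦃x y⦄, LeavittRel K G x y → f₀ x = f₀ y := by
    intro x y h
    cases h with
    | vertMul v w => rw [map_mul, hv, hv, F.p_mul_p]; split_ifs <;> simp [hv]
    | edgeLeft x => rw [map_mul, hv, he, F.p_mul_e]
    | edgeRight x => rw [map_mul, hv, he, F.e_mul_p]
    | ghostLeft x => rw [map_mul, hv, hg, F.p_mul_g]
    | ghostRight x => rw [map_mul, hv, hg, F.g_mul_p]
    | ghostEdge x y => rw [map_mul, hg, he, F.g_mul_e]; split_ifs <;> simp [hv]
    | cuntzKrieger v h =>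
      rw [hv, F.ck v h, map_sum, Finset.sum_filter]
      simp only [map_mul, he, hg]
    | unit => rw [map_one, map_sum]; simp only [hv, h1]
  refine ⟨RingQuot.liftAlgHom K ⟨f₀, hrel⟩, fun v => ?_, fun v => ?_, fun v => ?_⟩
  · rw [vert, RingQuot.liftAlgHom_mkAlgHom_apply, hv]
  · rw [edge, RingQuot.liftAlgHom_mkAlgHom_apply, he]
  · rw [ghost, RingQuot.liftAlgHom_mkAlgHom_apply, hg]

/-- Universal property for arbitrary Leavitt families: the induced homomorphism takes values
in the corner of `A` at the idempotent `∑ v, p v`, and is non-unital in general. -/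
lemma exists_lift {A : Type} [Ring A] [Algebra K A] (F : LeavittFamily K G A) :
    ∃ f : LeavittPathAlgebra K G →ₙₐ[K] A, (∀ v, f (vert K G v) = F.p v) ∧
      (∀ x, f (edge K G x) = F.e x) ∧ (∀ x, f (ghost K G x) = F.g x) := by
  set q : A := ∑ v, F.p v with hq
  have qp : ∀ v, q * F.p v = F.p v := fun v => by
    rw [hq, Finset.sum_mul]; simp [F.p_mul_p]
  have pq : ∀ v, F.p v * q = F.p v := fun v => by
    rw [hq, Finset.mul_sum]; simp [F.p_mul_p]
  have qe : ∀ v, q * F.e v = F.e v := fun v => by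
    rw [← F.p_mul_e, ← mul_assoc, qp]
  have eq : ∀ v, F.e v * q = F.e v := fun v => by
    rw [← F.e_mul_p, mul_assoc, pq]
  have qg : ∀ v, q * F.g v = F.g v := fun v => by
    rw [← F.p_mul_g, ← mul_assoc, qp]
  have gq : ∀ v, F.g v * q = F.g v := fun v => by
    rw [← F.g_mul_p, mul_assoc, pq]
  have hqq : q * q = q := by
    nth_rewrite 2 [hq]
    rw [Finset.mul_sum]; simp only [qp]; exact hq.symm
  have idem : IsIdempotentElem q := hqq
  have mem : ∀ {a : A}, q * a = a → a * q = a → a ∈ Subsemigroup.corner q := fun {a} h h' =>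
    (Subsemigroup.mem_corner_iff idem).2 ⟨h, h'⟩
  let i : K →+* idem.Corner :=
    { toFun := fun c => ⟨c • q, mem (by rw [mul_smul_comm, hqq]) (by rw [smul_mul_assoc, hqq])⟩
      map_one' := Subtype.ext (one_smul _ _)
      map_mul' := fun a b => Subtype.ext (by
        change (a * b) • q = (a • q) * (b • q)
        rw [smul_mul_smul_comm, hqq])
      map_zero' := Subtype.ext (zero_smul _ _)
      map_add' := fun a b => Subtype.ext (add_smul _ _ _) }
  have hi : ∀ (c : K) (x : idem.Corner), i c * x = x * i c := fun c x => Subtype.ext (by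
    have := (Subsemigroup.mem_corner_iff idem).1 x.2
    change (c • q) * x.1 = x.1 * (c • q)
    rw [smul_mul_assoc, mul_smul_comm, this.1, this.2])
  let _ : Algebra K idem.Corner := i.toAlgebra' hi
  have hsmul : ∀ (c : K) (x : idem.Corner), (c • x).1 = c • x.1 := fun c x => by
    have := (Subsemigroup.mem_corner_iff idem).1 x.2
    change (c • q) * x.1 = _
    rw [smul_mul_assoc, this.1]
  let val : idem.Corner →+ A :=
    { toFun := fun x => x.1, map_zero' := rfl, map_add' := fun _ _ => rfl }
  let F' : LeavittFamily K G idem.Corner :=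
    { p := fun v => ⟨F.p v, mem (qp v) (pq v)⟩
      e := fun v => ⟨F.e v, mem (qe v) (eq v)⟩
      g := fun v => ⟨F.g v, mem (qg v) (gq v)⟩
      p_mul_p := fun v w => Subtype.ext ((F.p_mul_p v w).trans
        (apply_ite val (v = w) ⟨F.p v, mem (qp v) (pq v)⟩ 0).symm)
      p_mul_e := fun x => Subtype.ext (F.p_mul_e x)
      e_mul_p := fun x => Subtype.ext (F.e_mul_p x)
      p_mul_g := fun x => Subtype.ext (F.p_mul_g x)
      g_mul_p := fun x => Subtype.ext (F.g_mul_p x)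
      g_mul_e := fun x y => Subtype.ext ((F.g_mul_e x y).trans
        (apply_ite val (x = y) ⟨F.p (G.r x), mem (qp _) (pq _)⟩ 0).symm)
      ck := fun v hv => Subtype.ext (by
        refine (F.ck v hv).trans ?_
        refine Eq.trans ?_ (map_sum val _ _).symm
        exact Finset.sum_congr rfl fun x _ => by split_ifs <;> rfl) }
  obtain ⟨f, h1, h2, h3⟩ := exists_lift_unital F' (Subtype.ext (map_sum val _ _))
  exact ⟨{ toFun := fun x => (f x).1
           map_smul' := fun c x => by rw [map_smul, hsmul]; rfl
           map_zero' := by rw [map_zero]; rfl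
           map_add' := fun x y => by rw [map_add]; rfl
           map_mul' := fun x y => by rw [map_mul]; rfl },
    fun v => congrArg Subtype.val (h1 v), fun v => congrArg Subtype.val (h2 v),
    fun v => congrArg Subtype.val (h3 v)⟩

end LeavittPathAlgebra

/-! ### Graph isomorphisms and isolated vertices -/

namespace LeavittPathAlgebra

variable {K : Type} [Field K]

lemma algHom_ext {G : FinGraph} {A : Type} [Ring A] [Algebra K A]
    {f h : LeavittPathAlgebra K G →ₐ[K] A}
    (hv : ∀ v, f (vert K G v) = h (vert K G v)) (he : ∀ x, f (edge K G x) = h (edge K G x))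
    (hg : ∀ x, f (ghost K G x) = h (ghost K G x)) : f = h := by
  have : (f : LeavittPathAlgebra K G →ₙₐ[K] A) = h := hom_ext hv he hg
  exact AlgHom.ext fun x => congrArg (fun t : LeavittPathAlgebra K G →ₙₐ[K] A => t x) this

/-- Pull-back of a Leavitt family along an isomorphism of graphs. -/
def _root_.LeavittFamily.comap {G H : FinGraph} {A : Type} [Ring A] [Algebra K A]
    (F : LeavittFamily K H A) (eV : G.V ≃ H.V) (eE : G.E ≃ H.E)
    (hs : ∀ x, H.s (eE x) = eV (G.s x)) (hr : ∀ x, H.r (eE x) = eV (G.r x)) :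
    LeavittFamily K G A where
  p v := F.p (eV v)
  e x := F.e (eE x)
  g x := F.g (eE x)
  p_mul_p v w := by simp [F.p_mul_p]
  p_mul_e x := by rw [← hs, F.p_mul_e]
  e_mul_p x := by rw [← hr, F.e_mul_p]
  p_mul_g x := by rw [← hr, F.p_mul_g]
  g_mul_p x := by rw [← hs, F.g_mul_p]
  g_mul_e x y := by simp [F.g_mul_e, hr]
  ck v hv := by
    have : H.IsRegular (eV v) := by
      obtain ⟨x, hx⟩ := hv
      exact ⟨eE x, by rw [hs, hx]⟩
    rw [F.ck _ this, ← eE.sum_comp]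
    simp [hs]

lemma nonempty_ringEquiv_of_iso {G H : FinGraph} (eV : G.V ≃ H.V) (eE : G.E ≃ H.E)
    (hs : ∀ x, H.s (eE x) = eV (G.s x)) (hr : ∀ x, H.r (eE x) = eV (G.r x)) :
    Nonempty (LeavittPathAlgebra K G ≃+* LeavittPathAlgebra K H) := by
  obtain ⟨f, f1, f2, f3⟩ := exists_lift_unital ((family K H).comap eV eE hs hr)
    ((eV.sum_comp (vert K H)).trans (sum_vert K H))
  obtain ⟨h, h1, h2, h3⟩ := exists_lift_unital ((family K G).comap eV.symm eE.symm
    (fun x => by rw [Equiv.eq_symm_apply, ← hs, Equiv.apply_symm_apply])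
    (fun x => by rw [Equiv.eq_symm_apply, ← hr, Equiv.apply_symm_apply]))
    ((eV.symm.sum_comp (vert K G)).trans (sum_vert K G))
  simp only [LeavittFamily.comap, family] at f1 f2 f3 h1 h2 h3
  refine ⟨(AlgEquiv.ofAlgHom f h ?_ ?_).toRingEquiv⟩
  · apply algHom_ext <;> intro x <;> simp [f1, f2, f3, h1, h2, h3]
  · apply algHom_ext <;> intro x <;> simp [f1, f2, f3, h1, h2, h3]

/-- An isolated vertex of `H` splits off a direct factor `K`. -/
lemma nonempty_ringEquiv_isolated (H : FinGraph) (v : H.V) (hsrc : H.IsSource v)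
    (hsink : H.IsSink v) :
    Nonempty (LeavittPathAlgebra K H ≃+* K × LeavittPathAlgebra K (H.sourceElim v hsrc)) := by
  set G := H.sourceElim v hsrc with hG
  let cv : ∀ u : H.V, u ≠ v → G.V := fun u h => ⟨u, h⟩
  let ce : H.E → G.E := fun x => ⟨x, hsink x⟩
  have ces : ∀ x h, cv (H.s x) h = G.s (ce x) := fun x h => rfl
  have cer : ∀ x h, cv (H.r x) h = G.r (ce x) := fun x h => rfl
  have cvi : ∀ u w h h', cv u h = cv w h' ↔ u = w := fun u w h h' => Subtype.mk_eq_mk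
  have cei : ∀ x y, ce x = ce y ↔ x = y := fun x y => Subtype.mk_eq_mk
  let eE : H.E ≃ G.E := ⟨ce, fun x => x.1, fun x => rfl, fun x => rfl⟩
  let p : H.V → K × LeavittPathAlgebra K G := fun u =>
    if h : u = v then (1, 0) else (0, vert K G (cv u h))
  have pv : p v = (1, 0) := dif_pos rfl
  have pn : ∀ u (h : u ≠ v), p u = (0, vert K G (cv u h)) := fun u h => dif_neg h
  let F : LeavittFamily K H (K × LeavittPathAlgebra K G) :=
    { p := p
      e := fun x => (0, edge K G (ce x))
      g := fun x => (0, ghost K G (ce x))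
      p_mul_p := fun u w => by
        by_cases hu : u = v <;> by_cases hw : w = v
        · subst hu; subst hw; simp [pv]
        · subst hu; simp [pv, pn w hw, Ne.symm hw]
        · subst hw; simp [pv, pn u hu, hu]
        · rw [pn u hu, pn w hw]
          simp only [Prod.mk_mul_mk, mul_zero, vert_mul_vert, cvi]
          split_ifs <;> rfl
      p_mul_e := fun x => by
        rw [pn _ (hsink x), ces]; simp [vert_mul_edge]
      e_mul_p := fun x => by
        rw [pn _ (hsrc x), cer]; simp [edge_mul_vert]
      p_mul_g := fun x => by
        rw [pn _ (hsrc x), cer]; simp [vert_mul_ghost]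
      g_mul_p := fun x => by
        rw [pn _ (hsink x), ces]; simp [ghost_mul_vert]
      g_mul_e := fun x y => by
        rw [pn _ (hsrc x), cer]
        simp only [Prod.mk_mul_mk, mul_zero, ghost_mul_edge, cei]
        split_ifs <;> rfl
      ck := fun u hu => by
        obtain ⟨x, rfl⟩ := hu
        rw [pn _ (hsink x), ces, vert_eq_sum K G _ ⟨ce x, rfl⟩, ← eE.sum_comp]
        ext
        · rw [Prod.fst_sum]
          symm
          apply Finset.sum_eq_zero
          intro y _
          split_ifs <;> simp
        · rw [Prod.snd_sum]
          refine Finset.sum_congr rfl fun y _ => ?_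
          have : G.s (eE y) = G.s (ce x) ↔ H.s y = H.s x := Subtype.mk_eq_mk
          simp only [this]
          split_ifs <;> rfl }
  have hsum : ∑ u, F.p u = 1 := by
    rw [← Finset.add_sum_erase _ _ (Finset.mem_univ v)]
    change p v + ∑ u ∈ Finset.univ.erase v, p u = 1
    rw [pv, Finset.sum_subtype (Finset.univ.erase v) (p := fun u => u ≠ v) (by simp)]
    have : ∀ u : {u // u ≠ v}, p u.1 = (0, vert K G u) := fun u => pn u.1 u.2
    simp only [this]
    ext
    · simp [Prod.fst_sum]
    · rw [Prod.snd_add, Prod.snd_sum, zero_add]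
      exact sum_vert K G
  obtain ⟨f, f1, f2, f3⟩ := exists_lift_unital F hsum
  let F' : LeavittFamily K G (LeavittPathAlgebra K H) :=
    { p := fun u => vert K H u.1
      e := fun x => edge K H x.1
      g := fun x => ghost K H x.1
      p_mul_p := fun u w => by
        have : u = w ↔ u.1 = w.1 := Subtype.ext_iff
        simp only [vert_mul_vert, this]
      p_mul_e := fun x => (family K H).p_mul_e x.1
      e_mul_p := fun x => (family K H).e_mul_p x.1
      p_mul_g := fun x => (family K H).p_mul_g x.1
      g_mul_p := fun x => (family K H).g_mul_p x.1
      g_mul_e := fun x y => by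
        have : x = y ↔ x.1 = y.1 := Subtype.ext_iff
        simp only [ghost_mul_edge, this]
        rfl
      ck := fun u hu => by
        obtain ⟨x, rfl⟩ := hu
        refine (vert_eq_sum K H _ ⟨x.1, rfl⟩).trans ?_
        rw [← eE.sum_comp]
        refine Finset.sum_congr rfl fun y _ => ?_
        have : G.s (eE y) = G.s x ↔ H.s y = (G.s x).1 := Subtype.ext_iff
        simp only [this]
        rfl }
  obtain ⟨h, h1, h2, h3⟩ := exists_lift F'
  have hv1 : vert K H v * h 1 = 0 := by
    rw [← sum_vert, map_sum, Finset.mul_sum]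
    refine Finset.sum_eq_zero fun u _ => ?_
    rw [h1, vert_mul_vert, if_neg (Ne.symm u.2)]
  have hv2 : h 1 * vert K H v = 0 := by
    rw [← sum_vert, map_sum, Finset.sum_mul]
    refine Finset.sum_eq_zero fun u _ => ?_
    rw [h1, vert_mul_vert, if_neg u.2]
  have hv3 : ∀ y, vert K H v * h y = 0 := fun y => by
    rw [← one_mul y, map_mul, ← mul_assoc, hv1, zero_mul]
  have hv4 : ∀ y, h y * vert K H v = 0 := fun y => by
    rw [← mul_one y, map_mul, mul_assoc, hv2, mul_zero]
  let k : K × LeavittPathAlgebra K G →ₙₐ[K] LeavittPathAlgebra K H :=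
    { toFun := fun y => y.1 • vert K H v + h y.2
      map_smul' := fun c y => by simp [mul_smul]
      map_zero' := by simp
      map_add' := fun y z => by simp [add_smul]; abel
      map_mul' := fun y z => by
        simp [mul_add, add_mul, hv3, hv4, vert_mul_vert, smul_smul, mul_comm] }
  have hkf : k.comp (f : LeavittPathAlgebra K H →ₙₐ[K] _) = NonUnitalAlgHom.id K _ := by
    apply hom_ext
    · intro u
      change k (f (vert K H u)) = vert K H u
      rw [f1]
      change k (p u) = _
      by_cases hu : u = v
      · subst hu; simp [pv, k]
      · simp only [pn u hu, k]
        change (0 : K) • _ + h (vert K G (cv u hu)) = _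
        rw [h1, zero_smul, zero_add]
    · intro x
      change k (f (edge K H x)) = edge K H x
      rw [f2]
      change (0 : K) • _ + h (edge K G (ce x)) = _
      rw [h2, zero_smul, zero_add]
    · intro x
      change k (f (ghost K H x)) = ghost K H x
      rw [f3]
      change (0 : K) • _ + h (ghost K G (ce x)) = _
      rw [h3, zero_smul, zero_add]
  have hfh : (f : LeavittPathAlgebra K H →ₙₐ[K] _).comp h = NonUnitalAlgHom.inr K K _ := by
    apply hom_ext
    · intro u
      change f (h (vert K G u)) = (0, vert K G u)
      rw [h1, f1]
      exact pn u.1 u.2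
    · intro x
      change f (h (edge K G x)) = (0, edge K G x)
      rw [h2, f2]
      rfl
    · intro x
      change f (h (ghost K G x)) = (0, ghost K G x)
      rw [h3, f3]
      rfl
  refine ⟨RingEquiv.ofBijective f ⟨?_, ?_⟩⟩
  · exact Function.LeftInverse.injective (g := k) fun x =>
      congrArg (fun t : LeavittPathAlgebra K H →ₙₐ[K] _ => t x) hkf
  · rintro ⟨c, y⟩
    refine ⟨c • vert K H v + h y, ?_⟩
    have hy : f (h y) = (0, y) :=
      congrArg (fun t : LeavittPathAlgebra K G →ₙₐ[K] K × LeavittPathAlgebra K G => t y) hfh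
    rw [map_add, map_smul, hy, f1]
    change c • p v + _ = _
    simp [pv]

end LeavittPathAlgebra

/-! ### Collapsing at a regular vertex -/

namespace Collapse

open LeavittPathAlgebra

variable {K : Type} [Field K] (E : FinGraph) (v : E.V) (hnl : ∀ e : E.E, E.s e = v → E.r e ≠ v)

/-- The edges emitted by the collapsed vertex. -/
abbrev Out : Type := {f : E.E // E.s f = v}

/-- A surviving vertex. -/
def cv (u : E.V) (h : u ≠ v) : (E.collapse v hnl).V := ⟨u, h⟩

/-- A surviving edge. -/
def co (x : E.E) (hr : E.r x ≠ v) (hs : E.s x ≠ v) : (E.collapse v hnl).E := .inl ⟨x, hr, hs⟩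

/-- A new edge `[x f]`. -/
def ci (x : E.E) (hr : E.r x = v) (f : Out E v) : (E.collapse v hnl).E := .inr (⟨x, hr⟩, f)

variable {E v}

@[simp] lemma cv_inj {u w : E.V} {h h'} : cv E v hnl u h = cv E v hnl w h' ↔ u = w :=
  Subtype.mk_eq_mk

@[simp] lemma co_inj {x y : E.E} {h1 h2 h3 h4} :
    co E v hnl x h1 h2 = co E v hnl y h3 h4 ↔ x = y :=
  Sum.inl_injective.eq_iff.trans Subtype.mk_eq_mk

@[simp] lemma ci_inj {x y : E.E} {f f' : Out E v} {h h'} :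
    ci E v hnl x h f = ci E v hnl y h' f' ↔ x = y ∧ f = f' :=
  Sum.inr_injective.eq_iff.trans (Prod.mk_inj.trans (and_congr_left' Subtype.mk_eq_mk))

@[simp] lemma co_ne_ci {x y : E.E} {f : Out E v} {h1 h2 h3} :
    co E v hnl x h1 h2 ≠ ci E v hnl y h3 f := Sum.inl_ne_inr

@[simp] lemma ci_ne_co {x y : E.E} {f : Out E v} {h1 h2 h3} :
    ci E v hnl y h3 f ≠ co E v hnl x h1 h2 := Sum.inr_ne_inl

lemma s_co {x : E.E} {h1 h2} : (E.collapse v hnl).s (co E v hnl x h1 h2) = cv E v hnl (E.s x) h2 :=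
  rfl

lemma r_co {x : E.E} {h1 h2} : (E.collapse v hnl).r (co E v hnl x h1 h2) = cv E v hnl (E.r x) h1 :=
  rfl

lemma s_ci {x : E.E} {h} {f : Out E v} : (E.collapse v hnl).s (ci E v hnl x h f) =
    cv E v hnl (E.s x) (fun h' => hnl x h' h) := rfl

lemma r_ci {x : E.E} {h} {f : Out E v} : (E.collapse v hnl).r (ci E v hnl x h f) =
    cv E v hnl (E.r f.1) (hnl f.1 f.2) := rfl

lemma forall_vert {P : (E.collapse v hnl).V → Prop} (h : ∀ u hu, P (cv E v hnl u hu)) (u) : P u :=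
  h u.1 u.2

lemma forall_edge {P : (E.collapse v hnl).E → Prop} (h : ∀ x h1 h2, P (co E v hnl x h1 h2))
    (h' : ∀ x hx f, P (ci E v hnl x hx f)) (x) : P x :=
  match x with
  | .inl x => h x.1 x.2.1 x.2.2
  | .inr (x, f) => h' x.1 x.2 f

lemma sum_edge {M : Type} [AddCommMonoid M] (F : (E.collapse v hnl).E → M) :
    ∑ x, F x = ∑ x : {e : E.E // E.r e ≠ v ∧ E.s e ≠ v}, F (co E v hnl x.1 x.2.1 x.2.2) +
      ∑ x : {e : E.E // E.r e = v}, ∑ f : Out E v, F (ci E v hnl x.1 x.2 f) :=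
  (Fintype.sum_sum_type F).trans (congrArg _ (Fintype.sum_prod_type _))

lemma sum_split {M : Type} [AddCommMonoid M] (F : E.E → M) (hF : ∀ x, E.s x = v → F x = 0) :
    ∑ x, F x = ∑ x : {e : E.E // E.r e ≠ v ∧ E.s e ≠ v}, F x.1 +
      ∑ x : {e : E.E // E.r e = v}, F x.1 := by
  rw [← Finset.sum_subtype (Finset.univ.filter fun e : E.E => E.r e ≠ v ∧ E.s e ≠ v) (by simp),
    ← Finset.sum_subtype (Finset.univ.filter fun e : E.E => E.r e = v) (by simp),
    Finset.sum_filter, Finset.sum_filter, ← Finset.sum_add_distrib]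
  refine Finset.sum_congr rfl fun x _ => ?_
  by_cases hs : E.s x = v
  · simp [hs, hF x hs]
  · by_cases hr : E.r x = v <;> simp [hr, hs]

lemma sum_out (hreg : E.IsRegular v) :
    ∑ f : Out E v, edge K E f.1 * ghost K E f.1 = vert K E v := by
  rw [vert_eq_sum K E v hreg, ← Finset.sum_filter]
  exact (Finset.sum_subtype (p := fun f => E.s f = v) _ (by simp)
    (fun f => edge K E f * ghost K E f)).symm

variable (K)

/-- The embedding of the Leavitt path algebra of the collapsed graph sends a new edge `[x f]`
to the product `x f`. -/
def family (hreg : E.IsRegular v) :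
    LeavittFamily K (E.collapse v hnl) (LeavittPathAlgebra K E) where
  p u := vert K E u.1
  e x := Sum.elim (fun y => edge K E y.1) (fun y => edge K E y.1.1 * edge K E y.2.1) x
  g x := Sum.elim (fun y => ghost K E y.1) (fun y => ghost K E y.2.1 * ghost K E y.1.1) x
  p_mul_p := forall_vert hnl fun u hu => forall_vert hnl fun w hw => by
    change vert K E u * vert K E w = _
    simp only [cv_inj, vert_mul_vert]
    rfl
  p_mul_e := forall_edge hnl
    (fun x h1 h2 => by
      change vert K E (E.s x) * edge K E x = edge K E x
      simp [vert_mul_edge])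
    (fun x hx f => by
      change vert K E (E.s x) * (edge K E x * edge K E f.1) = edge K E x * edge K E f.1
      simp [← mul_assoc, vert_mul_edge])
  e_mul_p := forall_edge hnl
    (fun x h1 h2 => by
      change edge K E x * vert K E (E.r x) = edge K E x
      simp [edge_mul_vert])
    (fun x hx f => by
      change edge K E x * edge K E f.1 * vert K E (E.r f.1) = edge K E x * edge K E f.1
      simp [mul_assoc, edge_mul_vert])
  p_mul_g := forall_edge hnl
    (fun x h1 h2 => by
      change vert K E (E.r x) * ghost K E x = ghost K E x
      simp [vert_mul_ghost])
    (fun x hx f => by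
      change vert K E (E.r f.1) * (ghost K E f.1 * ghost K E x) = ghost K E f.1 * ghost K E x
      simp [← mul_assoc, vert_mul_ghost])
  g_mul_p := forall_edge hnl
    (fun x h1 h2 => by
      change ghost K E x * vert K E (E.s x) = ghost K E x
      simp [ghost_mul_vert])
    (fun x hx f => by
      change ghost K E f.1 * ghost K E x * vert K E (E.s x) = ghost K E f.1 * ghost K E x
      simp [mul_assoc, ghost_mul_vert])
  g_mul_e := forall_edge hnl
    (fun x h1 h2 => forall_edge hnl
      (fun y h3 h4 => by
        change ghost K E x * edge K E y = if _ then vert K E (E.r x) else 0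
        simp only [ghost_mul_edge, co_inj])
      (fun y hy f => by
        change ghost K E x * (edge K E y * edge K E f.1) = _
        rw [← mul_assoc, ghost_mul_edge, if_neg (by rintro rfl; exact h1 hy), zero_mul,
          if_neg (co_ne_ci hnl)]))
    (fun x hx f => forall_edge hnl
      (fun y h3 h4 => by
        change ghost K E f.1 * ghost K E x * edge K E y = _
        rw [mul_assoc, ghost_mul_edge, if_neg (by rintro rfl; exact h3 hx), mul_zero,
          if_neg (ci_ne_co hnl)])
      (fun y hy f' => by
        change ghost K E f.1 * ghost K E x * (edge K E y * edge K E f'.1) =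
          if _ then vert K E (E.r f.1) else 0
        rw [mul_assoc, ← mul_assoc (ghost K E x), ghost_mul_edge]
        simp only [ci_inj]
        by_cases hxy : x = y
        · rw [if_pos hxy, hx, vert_mul_edge, if_pos f'.2.symm, ghost_mul_edge]
          simp [hxy, Subtype.ext_iff]
        · simp [hxy]))
  ck := forall_vert hnl fun u hu hru => by
    have hE : E.IsRegular u := by
      obtain ⟨x, hx⟩ := hru
      revert hx
      refine forall_edge hnl
        (P := fun x => (E.collapse v hnl).s x = cv E v hnl u hu → E.IsRegular u)
        (fun x h1 h2 hx => ?_) (fun x hx f h => ?_) x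
      · exact ⟨x, (cv_inj hnl).1 hx⟩
      · exact ⟨x, (cv_inj hnl).1 h⟩
    change vert K E u = _
    rw [vert_eq_sum K E u hE, sum_split _ (fun x hx => if_neg (by rw [hx]; exact hu.symm)),
      sum_edge]
    congr 1
    · refine Finset.sum_congr rfl fun x _ => ?_
      simp only [s_co, cv_inj]
      rfl
    · refine Finset.sum_congr rfl fun x _ => ?_
      simp only [s_ci, cv_inj]
      split_ifs with h
      · change _ = ∑ f : Out E v, edge K E x.1 * edge K E f.1 * (ghost K E f.1 * ghost K E x.1)
        have : ∀ f : Out E v, edge K E x.1 * edge K E f.1 * (ghost K E f.1 * ghost K E x.1) =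
            edge K E x.1 * (edge K E f.1 * ghost K E f.1) * ghost K E x.1 := fun f => by
          simp only [mul_assoc]
        simp only [this]
        rw [← Finset.sum_mul, ← Finset.mul_sum, sum_out hreg, edge_mul_vert, if_pos x.2]
      · simp

end Collapse

/-! ### A representation of the uncollapsed graph -/

set_option linter.unusedSectionVars false

namespace BlockOp

variable (K : Type) [Field K] {R : Type} [Ring R] [Algebra K R] {O : Type} [Fintype O]
  [DecidableEq O]

/-- The block operator `(n, m) ↦ (a n, 0)` on `R × (O → R)`. -/
def T (a : R) : Module.End K (R × (O → R)) :=
  LinearMap.inl K R (O → R) ∘ₗ LinearMap.mulLeft K a ∘ₗ LinearMap.fst K R (O → R)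

/-- The block operator `(n, m) ↦ (∑ c f * m f, 0)` on `R × (O → R)`. -/
def row (c : O → R) : Module.End K (R × (O → R)) :=
  LinearMap.inl K R (O → R) ∘ₗ (∑ f, LinearMap.mulLeft K (c f) ∘ₗ LinearMap.proj f) ∘ₗ
    LinearMap.snd K R (O → R)

/-- The block operator `(n, m) ↦ (0, f ↦ c f * n)` on `R × (O → R)`. -/
def col (c : O → R) : Module.End K (R × (O → R)) :=
  LinearMap.inr K R (O → R) ∘ₗ (LinearMap.pi fun f => LinearMap.mulLeft K (c f)) ∘ₗ
    LinearMap.fst K R (O → R)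

/-- The block operator `(n, m) ↦ (0, f ↦ c f * m f)` on `R × (O → R)`. -/
def diag (c : O → R) : Module.End K (R × (O → R)) :=
  LinearMap.inr K R (O → R) ∘ₗ
    (LinearMap.pi fun f => LinearMap.mulLeft K (c f) ∘ₗ LinearMap.proj f) ∘ₗ
    LinearMap.snd K R (O → R)

lemma T_apply (a : R) (x : R × (O → R)) : T K a x = (a * x.1, 0) := rfl

lemma row_apply (c : O → R) (x : R × (O → R)) : row K c x = (∑ f, c f * x.2 f, 0) := by
  simp [row]

lemma col_apply (c : O → R) (x : R × (O → R)) : col K c x = (0, fun f => c f * x.1) := rfl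

lemma diag_apply (c : O → R) (x : R × (O → R)) : diag K c x = (0, fun f => c f * x.2 f) := rfl

variable (a b : R) (c d b' : O → R)

lemma T_mul_T : T K a * T K b = T (O := O) K (a * b) :=
  LinearMap.ext fun x => by simp [T_apply, mul_assoc]

lemma T_mul_row : T K a * row K c = row K fun f => a * c f :=
  LinearMap.ext fun x => by simp [T_apply, row_apply, mul_assoc, Finset.mul_sum]

lemma T_mul_col : T K a * col K c = 0 :=
  LinearMap.ext fun x => by simp [T_apply, col_apply]

lemma T_mul_diag : T K a * diag K c = 0 :=
  LinearMap.ext fun x => by simp [T_apply, diag_apply]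

lemma row_mul_T : row K c * T K a = 0 :=
  LinearMap.ext fun x => by simp [T_apply, row_apply]

lemma row_mul_row : row K c * row K d = 0 :=
  LinearMap.ext fun x => by simp [row_apply]

lemma row_mul_col : row K c * col K d = T K (∑ f, c f * d f) :=
  LinearMap.ext fun x => by
    simp [T_apply, row_apply, col_apply, mul_assoc, Finset.sum_mul]

lemma row_mul_diag : row K c * diag K d = row K (c * d) :=
  LinearMap.ext fun x => by simp [row_apply, diag_apply, mul_assoc]

lemma col_mul_T : col K c * T K a = col K fun f => c f * a :=
  LinearMap.ext fun x => by simp [T_apply, col_apply, mul_assoc]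

lemma diag_mul_T : diag K c * T K a = 0 :=
  LinearMap.ext fun x => by simp [T_apply, diag_apply]; rfl

lemma diag_mul_row : diag K c * row K d = 0 :=
  LinearMap.ext fun x => by simp [row_apply, diag_apply]; rfl

lemma diag_mul_col : diag K c * col K d = col K (c * d) :=
  LinearMap.ext fun x => by simp [col_apply, diag_apply, mul_assoc]

lemma diag_mul_diag : diag K c * diag K d = diag K (c * d) :=
  LinearMap.ext fun x => by simp [diag_apply, mul_assoc]

lemma col_single_mul_row_single (f : O) :
    col K (Pi.single f a) * row K (Pi.single f b) = diag K (Pi.single f (a * b)) :=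
  LinearMap.ext fun x => by
    simp only [Module.End.mul_apply, col_apply, row_apply, diag_apply, Prod.mk.injEq, true_and]
    funext g
    rw [Finset.sum_eq_single f (by intro h _ hh; simp [hh]) (by simp)]
    by_cases hg : g = f
    · subst hg; simp [mul_assoc]
    · simp [hg]

lemma T_sum {ι : Type} (t : Finset ι) (F : ι → R) :
    T (O := O) K (∑ i ∈ t, F i) = ∑ i ∈ t, T K (F i) :=
  LinearMap.ext fun x => by
    simp only [LinearMap.sum_apply, T_apply, Finset.sum_mul]
    ext <;> simp [Prod.fst_sum, Prod.snd_sum]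

lemma sum_diag_single : ∑ f, diag K (Pi.single f (c f)) = diag K c :=
  LinearMap.ext fun x => by
    simp only [LinearMap.sum_apply, diag_apply]
    ext g
    · simp [Prod.fst_sum]
    · simp [Prod.snd_sum, Pi.single_apply]

lemma T_zero : T (O := O) K (0 : R) = 0 := LinearMap.ext fun x => by simp [T_apply]

lemma diag_zero : diag K (0 : O → R) = 0 := LinearMap.ext fun x => by simp [diag_apply]; rfl

lemma T_add : T (O := O) K (a + b) = T K a + T K b :=
  LinearMap.ext fun x => by simp [T_apply, add_mul]

lemma col_mul_col : col K c * col K d = 0 :=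
  LinearMap.ext fun x => by simp [col_apply]; rfl

lemma row_eq_zero (h : ∀ f, c f = 0) : row K c = 0 :=
  LinearMap.ext fun x => by simp [row_apply, h]

lemma col_eq_zero (h : ∀ f, c f = 0) : col K c = 0 :=
  LinearMap.ext fun x => by simp [col_apply, h]; rfl

lemma col_mul_row (h : ∀ f g, c f * d g = if f = g then b' f else 0) :
    col K c * row K d = diag K b' :=
  LinearMap.ext fun x => by
    simp [col_apply, row_apply, diag_apply, Finset.mul_sum, ← mul_assoc, h]

end BlockOp

namespace Collapse

open LeavittPathAlgebra BlockOp

variable (K : Type) [Field K] {E : FinGraph} {v : E.V} (hnl : ∀ e : E.E, E.s e = v → E.r e ≠ v)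

/-- The space on which `L_K(E)` acts: the direct sum `R ⊕ ⨁_f R`, where `R` is the Leavitt path algebra
of the collapse and `f` runs through the edges emitted by `v`. -/
abbrev Space : Type := LeavittPathAlgebra K (E.collapse v hnl) ×
  (Out E v → LeavittPathAlgebra K (E.collapse v hnl))

/-- The action of the vertices of `E`; the vertex `v` is replaced by the ranges of the edges
it emits. -/
def opP (u : E.V) : Module.End K (Space K hnl) :=
  if h : u = v then diag K fun f => vert K _ (cv E v hnl (E.r f.1) (hnl f.1 f.2))
  else T K (vert K _ (cv E v hnl u h))

/-- The action of the edges of `E`. -/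
def opE (x : E.E) : Module.End K (Space K hnl) :=
  if hs : E.s x = v then
    col K (Pi.single ⟨x, hs⟩ (vert K _ (cv E v hnl (E.r x) (hnl x hs))))
  else if hr : E.r x = v then row K fun f => edge K _ (ci E v hnl x hr f)
  else T K (edge K _ (co E v hnl x hr hs))

/-- The action of the ghost edges of `E`. -/
def opG (x : E.E) : Module.End K (Space K hnl) :=
  if hs : E.s x = v then
    row K (Pi.single ⟨x, hs⟩ (vert K _ (cv E v hnl (E.r x) (hnl x hs))))
  else if hr : E.r x = v then col K fun f => ghost K _ (ci E v hnl x hr f)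
  else T K (ghost K _ (co E v hnl x hr hs))

lemma opP_self : opP K hnl v =
    diag K fun f => vert K _ (cv E v hnl (E.r f.1) (hnl f.1 f.2)) := dif_pos rfl

lemma opP_of_ne {u : E.V} (h : u ≠ v) : opP K hnl u = T K (vert K _ (cv E v hnl u h)) := dif_neg h

lemma opE_out {x : E.E} (hs : E.s x = v) : opE K hnl x =
    col K (Pi.single ⟨x, hs⟩ (vert K _ (cv E v hnl (E.r x) (hnl x hs)))) := dif_pos hs

lemma opE_in {x : E.E} (hr : E.r x = v) :
    opE K hnl x = row K fun f => edge K _ (ci E v hnl x hr f) :=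
  (dif_neg fun hs => hnl x hs hr).trans (dif_pos hr)

lemma opE_old {x : E.E} (hr : E.r x ≠ v) (hs : E.s x ≠ v) :
    opE K hnl x = T K (edge K _ (co E v hnl x hr hs)) := (dif_neg hs).trans (dif_neg hr)

lemma opG_out {x : E.E} (hs : E.s x = v) : opG K hnl x =
    row K (Pi.single ⟨x, hs⟩ (vert K _ (cv E v hnl (E.r x) (hnl x hs)))) := dif_pos hs

lemma opG_in {x : E.E} (hr : E.r x = v) :
    opG K hnl x = col K fun f => ghost K _ (ci E v hnl x hr f) :=
  (dif_neg fun hs => hnl x hs hr).trans (dif_pos hr)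

lemma opG_old {x : E.E} (hr : E.r x ≠ v) (hs : E.s x ≠ v) :
    opG K hnl x = T K (ghost K _ (co E v hnl x hr hs)) := (dif_neg hs).trans (dif_neg hr)

lemma edge_cases {P : E.E → Prop} (h1 : ∀ x, E.s x = v → P x) (h2 : ∀ x, E.r x = v → P x)
    (h3 : ∀ x, E.r x ≠ v → E.s x ≠ v → P x) (x : E.E) : P x := by
  by_cases hs : E.s x = v
  · exact h1 x hs
  · by_cases hr : E.r x = v
    · exact h2 x hr
    · exact h3 x hr hs

/-- The operators above satisfy the defining relations of `L_K(E)`. -/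
def repFamily (hreg : E.IsRegular v) : LeavittFamily K E (Module.End K (Space K hnl)) where
  p := opP K hnl
  e := opE K hnl
  g := opG K hnl
  p_mul_p u w := by
    by_cases hu : u = v
    · subst hu
      by_cases hw : w = u
      · subst hw
        rw [opP_self, diag_mul_diag, if_pos rfl]
        congr 1; funext f
        simp [vert_mul_vert]
      · rw [opP_self, opP_of_ne K hnl hw, diag_mul_T, if_neg (Ne.symm hw)]
    · by_cases hw : w = v
      · subst hw
        rw [opP_self, opP_of_ne K hnl hu, T_mul_diag, if_neg hu]
      · rw [opP_of_ne K hnl hw, opP_of_ne K hnl hu, T_mul_T, vert_mul_vert]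
        simp only [cv_inj]
        split_ifs
        · rfl
        · exact T_zero K
  p_mul_e := edge_cases
    (fun x hs => by
      rw [opE_out K hnl hs, hs, opP_self, diag_mul_col]
      congr 1; funext f
      by_cases hf : f = ⟨x, hs⟩
      · subst hf; simp [vert_mul_vert]
      · simp [hf])
    (fun x hr => by
      rw [opE_in K hnl hr, opP_of_ne K hnl (fun hs => hnl x hs hr), T_mul_row]
      congr 1; funext f
      rw [vert_mul_edge, s_ci, if_pos rfl])
    (fun x hr hs => by
      rw [opE_old K hnl hr hs, opP_of_ne K hnl hs, T_mul_T, vert_mul_edge, s_co, if_pos rfl])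
  e_mul_p := edge_cases
    (fun x hs => by
      rw [opE_out K hnl hs, opP_of_ne K hnl (hnl x hs), col_mul_T]
      congr 1; funext f
      by_cases hf : f = ⟨x, hs⟩
      · subst hf; simp [vert_mul_vert]
      · simp [hf])
    (fun x hr => by
      rw [opE_in K hnl hr, hr, opP_self, row_mul_diag]
      congr 1; funext f
      rw [Pi.mul_apply, edge_mul_vert, r_ci, if_pos rfl])
    (fun x hr hs => by
      rw [opE_old K hnl hr hs, opP_of_ne K hnl hr, T_mul_T, edge_mul_vert, r_co, if_pos rfl])
  p_mul_g := edge_cases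
    (fun x hs => by
      rw [opG_out K hnl hs, opP_of_ne K hnl (hnl x hs), T_mul_row]
      congr 1; funext f
      by_cases hf : f = ⟨x, hs⟩
      · subst hf; simp [vert_mul_vert]
      · simp [hf])
    (fun x hr => by
      rw [opG_in K hnl hr, hr, opP_self, diag_mul_col]
      congr 1; funext f
      rw [Pi.mul_apply, vert_mul_ghost, r_ci, if_pos rfl])
    (fun x hr hs => by
      rw [opG_old K hnl hr hs, opP_of_ne K hnl hr, T_mul_T, vert_mul_ghost, r_co, if_pos rfl])
  g_mul_p := edge_cases
    (fun x hs => by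
      rw [opG_out K hnl hs, hs, opP_self, row_mul_diag]
      congr 1; funext f
      by_cases hf : f = ⟨x, hs⟩
      · subst hf; simp [vert_mul_vert]
      · simp [hf])
    (fun x hr => by
      rw [opG_in K hnl hr, opP_of_ne K hnl (fun hs => hnl x hs hr), col_mul_T]
      congr 1; funext f
      rw [ghost_mul_vert, s_ci, if_pos rfl])
    (fun x hr hs => by
      rw [opG_old K hnl hr hs, opP_of_ne K hnl hs, T_mul_T, ghost_mul_vert, s_co, if_pos rfl])
  g_mul_e := edge_cases
    (fun x hs => edge_cases
      (fun y hs' => by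
        rw [opG_out K hnl hs, opE_out K hnl hs', row_mul_col]
        by_cases hxy : x = y
        · subst hxy
          rw [if_pos rfl, opP_of_ne K hnl (hnl x hs),
            Finset.sum_eq_single ⟨x, hs⟩ (by intro f _ hf; simp [hf]) (by simp)]
          simp [vert_mul_vert]
        · rw [if_neg hxy, Finset.sum_eq_zero, T_zero]
          intro f _
          by_cases hf : f = ⟨x, hs⟩
          · subst hf
            rw [Pi.single_eq_of_ne (i := (⟨y, hs'⟩ : Out E v)) (by simpa using hxy), mul_zero]
          · simp [hf])
      (fun y hr => by
        rw [opG_out K hnl hs, opE_in K hnl hr, row_mul_row,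
          if_neg (by rintro rfl; exact hnl x hs hr)])
      (fun y hr' hs' => by
        rw [opG_out K hnl hs, opE_old K hnl hr' hs', row_mul_T,
          if_neg (by rintro rfl; exact hs' hs)]))
    (fun x hr => edge_cases
      (fun y hs => by
        rw [opG_in K hnl hr, opE_out K hnl hs, col_mul_col,
          if_neg (by rintro rfl; exact hnl x hs hr)])
      (fun y hr' => by
        rw [opG_in K hnl hr, opE_in K hnl hr', hr, opP_self]
        split_ifs with hxy
        · subst hxy
          refine col_mul_row K _ _ _ fun f f' => ?_
          rw [ghost_mul_edge]
          simp [r_ci]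
        · rw [← diag_zero]
          refine col_mul_row K _ _ _ fun f f' => ?_
          rw [ghost_mul_edge, if_neg (by simp [hxy])]
          simp)
      (fun y hr' hs' => by
        rw [opG_in K hnl hr, opE_old K hnl hr' hs', col_mul_T,
          if_neg (by rintro rfl; exact hr' hr)]
        refine col_eq_zero K _ fun f => ?_
        rw [ghost_mul_edge, if_neg (ci_ne_co hnl)]))
    (fun x hr hs => edge_cases
      (fun y hs' => by
        rw [opG_old K hnl hr hs, opE_out K hnl hs', T_mul_col,
          if_neg (by rintro rfl; exact hs hs')])
      (fun y hr' => by
        rw [opG_old K hnl hr hs, opE_in K hnl hr', T_mul_row,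
          if_neg (by rintro rfl; exact hr hr')]
        refine row_eq_zero K _ fun f => ?_
        rw [ghost_mul_edge, if_neg (co_ne_ci hnl)])
      (fun y hr' hs' => by
        rw [opG_old K hnl hr hs, opE_old K hnl hr' hs', T_mul_T, ghost_mul_edge,
          opP_of_ne K hnl hr]
        simp only [co_inj]
        split_ifs
        · rfl
        · exact T_zero K))
  ck u hu := by
    by_cases huv : u = v
    · subst huv
      rw [opP_self, ← sum_diag_single, ← Finset.sum_filter]
      rw [Finset.sum_subtype (p := fun f => E.s f = u) _ (by simp)]
      refine Finset.sum_congr rfl fun f _ => ?_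
      rw [opE_out K hnl f.2, opG_out K hnl f.2, col_single_mul_row_single, vert_mul_vert,
        if_pos rfl]
    · have hG : (E.collapse v hnl).IsRegular (cv E v hnl u huv) := by
        obtain ⟨x, hx⟩ := hu
        obtain ⟨f, hf⟩ := hreg
        subst hx
        by_cases hr : E.r x = v
        · exact ⟨ci E v hnl x hr ⟨f, hf⟩, rfl⟩
        · exact ⟨co E v hnl x hr huv, rfl⟩
      rw [opP_of_ne K hnl huv, vert_eq_sum K _ _ hG, sum_edge,
        sum_split _ (fun x hx => if_neg (by rw [hx]; exact Ne.symm huv)), T_add, T_sum, T_sum]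
      congr 1
      · refine Finset.sum_congr rfl fun x _ => ?_
        simp only [s_co, cv_inj]
        split_ifs
        · rw [opE_old K hnl x.2.1 x.2.2, opG_old K hnl x.2.1 x.2.2, T_mul_T]
        · exact T_zero K
      · refine Finset.sum_congr rfl fun x _ => ?_
        simp only [s_ci, cv_inj]
        split_ifs
        · rw [opE_in K hnl x.2, opG_in K hnl x.2, row_mul_col]
        · simp [T_zero]

end Collapse

/-! ### The full corner given by a collapse -/

namespace Collapse

open LeavittPathAlgebra

section corner

variable (K : Type) [Field K] {E : FinGraph} {v : E.V}

lemma compl_mul_vert (u : E.V) :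
    (1 - vert K E v) * vert K E u = if u = v then 0 else vert K E u := by
  rw [sub_mul, one_mul, vert_mul_vert]
  split_ifs with h1 h2 h2 <;> simp_all

lemma compl_mul_edge (x : E.E) :
    (1 - vert K E v) * edge K E x = if E.s x = v then 0 else edge K E x := by
  rw [sub_mul, one_mul, vert_mul_edge]
  split_ifs with h1 h2 h2 <;> simp_all

lemma edge_mul_compl (x : E.E) :
    edge K E x * (1 - vert K E v) = if E.r x = v then 0 else edge K E x := by
  rw [mul_sub, mul_one, edge_mul_vert]
  split_ifs <;> simp

lemma compl_mul_ghost (x : E.E) :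
    (1 - vert K E v) * ghost K E x = if E.r x = v then 0 else ghost K E x := by
  rw [sub_mul, one_mul, vert_mul_ghost]
  split_ifs with h1 h2 h2 <;> simp_all

lemma ghost_mul_compl (x : E.E) :
    ghost K E x * (1 - vert K E v) = if E.s x = v then 0 else ghost K E x := by
  rw [mul_sub, mul_one, ghost_mul_vert]
  split_ifs <;> simp

lemma compl_mul_compl :
    (1 - vert K E v) * (1 - vert K E v) = 1 - vert K E v := by
  rw [mul_sub, mul_one, compl_mul_vert, if_pos rfl, sub_zero]

variable (v) in
/-- Together with `right`, a factorisation of the unit through the corner at `1 - v`: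
`∑ i, right i * left i = 1`. -/
def left : Option (Out E v) → LeavittPathAlgebra K E
  | none => 1 - vert K E v
  | some f => ghost K E f.1

variable (v) in
/-- See `left`. -/
def right : Option (Out E v) → LeavittPathAlgebra K E
  | none => 1 - vert K E v
  | some f => edge K E f.1

lemma sum_right_left (hreg : E.IsRegular v) : ∑ i, right K v i * left K v i = 1 := by
  rw [Fintype.sum_option]
  change (1 - vert K E v) * (1 - vert K E v) + ∑ f : Out E v, edge K E f.1 * ghost K E f.1 = 1
  rw [sum_out hreg, compl_mul_compl, sub_add_cancel]

/-- A subset of `L_K(E)` closed under the algebra operations contains the corner at `1 - v` as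
soon as it contains the evident generators of that corner: vertices other than `v`, edges and
ghost edges away from `v`, and the paths of length two through `v` together with their ghosts. -/
lemma corner_subset (hnl : ∀ e : E.E, E.s e = v → E.r e ≠ v) (hreg : E.IsRegular v)
    (S : Set (LeavittPathAlgebra K E)) (zero : 0 ∈ S)
    (add : ∀ x ∈ S, ∀ y ∈ S, x + y ∈ S) (mul : ∀ x ∈ S, ∀ y ∈ S, x * y ∈ S)
    (smul : ∀ (c : K), ∀ x ∈ S, c • x ∈ S)
    (hv : ∀ u, u ≠ v → vert K E u ∈ S)
    (he : ∀ x, E.r x ≠ v → E.s x ≠ v → edge K E x ∈ S)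
    (hg : ∀ x, E.r x ≠ v → E.s x ≠ v → ghost K E x ∈ S)
    (hee : ∀ x f, E.r x = v → E.s f = v → edge K E x * edge K E f ∈ S)
    (hgg : ∀ x f, E.r x = v → E.s f = v → ghost K E f * ghost K E x ∈ S)
    (x : LeavittPathAlgebra K E) (i j) : left K v i * x * right K v j ∈ S := by
  induction x using LeavittPathAlgebra.induction generalizing i j with
  | zero => simpa
  | add x y hx hy => rw [mul_add, add_mul]; exact add _ (hx i j) _ (hy i j)
  | smul c x hx => rw [mul_smul_comm, smul_mul_assoc]; exact smul c _ (hx i j)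
  | mul x y hx hy =>
    have : left K v i * (x * y) * right K v j =
        ∑ k, (left K v i * x * right K v k) * (left K v k * y * right K v j) := by
      calc left K v i * (x * y) * right K v j
          = left K v i * x * (∑ k, right K v k * left K v k) * y * right K v j := by
            rw [sum_right_left K hreg]; simp only [mul_assoc, one_mul]
        _ = _ := by simp only [Finset.mul_sum, Finset.sum_mul, mul_assoc]
    rw [this]
    exact Finset.sum_induction _ (· ∈ S) (fun a b ha hb => add a ha b hb) zero
      fun k _ => mul _ (hx i k) _ (hy k j)
  | vert u =>
    by_cases hu : u = v
    · subst hu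
      rcases i with _ | f
      · simpa [left, compl_mul_vert] using zero
      · rcases j with _ | f'
        · simp only [left, right, mul_assoc]
          rw [mul_sub, vert_mul_vert]
          simpa using zero
        · simp only [left, right, mul_assoc, vert_mul_edge, if_pos f'.2.symm, ghost_mul_edge]
          split_ifs
          · exact hv _ (hnl _ f.2)
          · exact zero
    · rcases i with _ | f
      · rcases j with _ | f'
        · simp only [left, right, compl_mul_vert, if_neg hu]
          rw [mul_sub, vert_mul_vert, if_neg hu]
          simpa using hv u hu
        · simp only [left, right, compl_mul_vert, if_neg hu, vert_mul_edge, f'.2]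
          exact zero
      · simp only [left, ghost_mul_vert, f.2, if_neg (Ne.symm hu), zero_mul]
        exact zero
  | edge x =>
    rcases i with _ | f
    · rcases j with _ | f'
      · simp only [left, right, compl_mul_edge]
        split_ifs with h
        · simpa using zero
        · rw [edge_mul_compl]
          split_ifs with h'
          · exact zero
          · exact he x h' h
      · simp only [left, right, compl_mul_edge]
        split_ifs with h
        · simpa using zero
        · by_cases h' : E.r x = v
          · exact hee x f' h' f'.2
          · rw [edge_mul_edge K E _ _ (by rw [f'.2]; exact h')]
            exact zero
    · simp only [left, ghost_mul_edge]
      split_ifs with h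
      · rcases j with _ | f'
        · simp only [right]
          rw [mul_sub, vert_mul_vert, if_neg (hnl _ f.2)]
          simpa using hv _ (hnl _ f.2)
        · simp only [right]
          rw [vert_mul_edge, if_neg (by rw [f'.2]; exact hnl _ f.2)]
          exact zero
      · simpa using zero
  | ghost x =>
    rw [mul_assoc]
    rcases j with _ | f'
    · rcases i with _ | f
      · simp only [left, right, ghost_mul_compl]
        split_ifs with h
        · simpa using zero
        · rw [compl_mul_ghost]
          split_ifs with h'
          · exact zero
          · exact hg x h' h
      · simp only [left, right, ghost_mul_compl]
        split_ifs with h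
        · simpa using zero
        · by_cases h' : E.r x = v
          · exact hgg x f h' f.2
          · rw [ghost_mul_ghost K E _ _ (by rw [f.2]; exact Ne.symm h')]
            exact zero
    · simp only [right, ghost_mul_edge]
      split_ifs with h
      · rw [h]
        rcases i with _ | f
        · simp only [left]
          rw [compl_mul_vert, if_neg (hnl _ f'.2)]
          exact hv _ (hnl _ f'.2)
        · simp only [left]
          rw [ghost_mul_vert, if_neg (by rw [f.2]; exact Ne.symm (hnl _ f'.2))]
          exact zero
      · simpa using zero

end corner

variable (K : Type) [Field K] {E : FinGraph} {v : E.V} (hnl : ∀ e : E.E, E.s e = v → E.r e ≠ v)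

/-- The Leavitt path algebra of the collapse of `E` at `v` is the full corner of `L_K(E)` at
`1 - v`. -/
lemma fullCorner (hreg : E.IsRegular v) :
    FullCorner (LeavittPathAlgebra K (E.collapse v hnl)) (LeavittPathAlgebra K E) := by
  obtain ⟨φ, φv, φe, φg⟩ := exists_lift (family K hnl hreg)
  obtain ⟨ψ, ψv, ψe, ψg⟩ := exists_lift (repFamily K hnl hreg)
  have φv' : ∀ u hu, φ (vert K _ (cv E v hnl u hu)) = vert K E u := fun u hu => φv _
  have φco : ∀ x h1 h2, φ (edge K _ (co E v hnl x h1 h2)) = edge K E x := fun x h1 h2 => φe _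
  have φci : ∀ x hx f, φ (edge K _ (ci E v hnl x hx f)) = edge K E x * edge K E f.1 :=
    fun x h1 h2 => φe _
  have φco' : ∀ x h1 h2, φ (ghost K _ (co E v hnl x h1 h2)) = ghost K E x := fun x h1 h2 => φg _
  have φci' : ∀ x hx f, φ (ghost K _ (ci E v hnl x hx f)) = ghost K E f.1 * ghost K E x :=
    fun x h1 h2 => φg _
  replace ψv : ∀ u, ψ (vert K E u) = opP K hnl u := ψv
  replace ψe : ∀ u, ψ (edge K E u) = opE K hnl u := ψe
  replace ψg : ∀ u, ψ (ghost K E u) = opG K hnl u := ψg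
  -- The representation `ψ` restricts along `φ` to left multiplication on the first summand.
  let τ : LeavittPathAlgebra K (E.collapse v hnl) →ₙₐ[K] Module.End K (Space K hnl) :=
    { toFun := BlockOp.T K
      map_smul' := fun c a => LinearMap.ext fun x => by simp [BlockOp.T_apply]
      map_zero' := BlockOp.T_zero K
      map_add' := BlockOp.T_add K
      map_mul' := fun a b => (BlockOp.T_mul_T K a b).symm }
  have τ_apply : ∀ a, τ a = BlockOp.T K a := fun a => rfl
  have hcomp : ψ.comp φ = τ := by
    refine LeavittPathAlgebra.hom_ext (forall_vert hnl fun u hu => ?_)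
      (forall_edge hnl (fun x h1 h2 => ?_) (fun x hx f => ?_))
      (forall_edge hnl (fun x h1 h2 => ?_) (fun x hx f => ?_))
    · rw [NonUnitalAlgHom.comp_apply, φv', ψv, τ_apply, opP_of_ne K hnl hu]
    · rw [NonUnitalAlgHom.comp_apply, φco, ψe, τ_apply, opE_old K hnl h1 h2]
    · rw [NonUnitalAlgHom.comp_apply, φci, map_mul, ψe, ψe, τ_apply, opE_in K hnl hx,
        opE_out K hnl f.2, BlockOp.row_mul_col,
        Finset.sum_eq_single f (by intro g _ hg; simp [hg]) (by simp)]
      rw [Pi.single_eq_same, edge_mul_vert, r_ci, if_pos rfl]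
    · rw [NonUnitalAlgHom.comp_apply, φco', ψg, τ_apply, opG_old K hnl h1 h2]
    · rw [NonUnitalAlgHom.comp_apply, φci', map_mul, ψg, ψg, τ_apply, opG_in K hnl hx,
        opG_out K hnl f.2, BlockOp.row_mul_col,
        Finset.sum_eq_single f (by intro g _ hg; simp [hg]) (by simp)]
      rw [Pi.single_eq_same, vert_mul_ghost, r_ci, if_pos rfl]
  have hinj : Function.Injective φ := fun a b hab => by
    have h : τ a = τ b := by
      rw [← hcomp, NonUnitalAlgHom.comp_apply, NonUnitalAlgHom.comp_apply, hab]
    have h' := congrArg (fun t : Module.End K (Space K hnl) => (t (1, 0)).1) h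
    simpa [τ_apply, BlockOp.T_apply] using h'
  have hone : φ 1 = 1 - vert K E v := by
    rw [← sum_vert K (E.collapse v hnl), map_sum, ← sum_vert K E,
      ← Finset.sum_erase_eq_sub (Finset.mem_univ v)]
    rw [Finset.sum_subtype (p := fun u => u ≠ v) _ (by simp)]
    exact Finset.sum_congr rfl fun u _ => φv u
  refine ⟨(φ : LeavittPathAlgebra K (E.collapse v hnl) →ₙ+* LeavittPathAlgebra K E), hinj,
    fun x => ?_, Option (Out E v), inferInstance, right K v, left K v, ?_⟩
  · change ∃ y, φ y = φ 1 * x * φ 1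
    rw [hone]
    refine corner_subset K hnl hreg (Set.range φ) ⟨0, map_zero φ⟩ ?_ ?_ ?_ ?_ ?_ ?_ ?_ ?_ x none none
    · rintro _ ⟨a, rfl⟩ _ ⟨b, rfl⟩
      exact ⟨a + b, map_add φ a b⟩
    · rintro _ ⟨a, rfl⟩ _ ⟨b, rfl⟩
      exact ⟨a * b, map_mul φ a b⟩
    · rintro c _ ⟨a, rfl⟩
      exact ⟨c • a, map_smul φ c a⟩
    · exact fun u hu => ⟨_, φv' u hu⟩
    · exact fun x h1 h2 => ⟨_, φco x h1 h2⟩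
    · exact fun x h1 h2 => ⟨_, φco' x h1 h2⟩
    · exact fun x f hx hf => ⟨_, φci x hx ⟨f, hf⟩⟩
    · exact fun x f hx hf => ⟨_, φci' x hx ⟨f, hf⟩⟩
  · change ∑ i, right K v i * φ 1 * left K v i = 1
    rw [hone]
    refine (Finset.sum_congr rfl fun i _ => ?_).trans (sum_right_left K hreg)
    congr 1
    rcases i with _ | f
    · exact compl_mul_compl K
    · exact (edge_mul_compl K f.1).trans (if_neg (hnl _ f.2))

lemma stableMorita (hreg : E.IsRegular v) : StableMorita (LeavittPathAlgebra K E)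
    (LeavittPathAlgebra K (E.collapse v hnl)) :=
  (fullCorner K hnl hreg).stableMorita

end Collapse

/-! ### Chains of source eliminations and collapses -/

namespace FinGraph

lemma not_isSink_iff {G : FinGraph} {v : G.V} : ¬ G.IsSink v ↔ G.IsRegular v := by
  simp [IsSink, IsRegular]

lemma ElimChain.vmap_injective {E : FinGraph} :
    ∀ {H : FinGraph} (c : ElimChain E H), Function.Injective c.vmap
  | _, .refl => fun _ _ h => h
  | _, .step c _ _ => fun _ _ h => Subtype.ext (c.vmap_injective h)

lemma isSink_sourceElim {H : FinGraph} {v : H.V} (hsrc : H.IsSource v)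
    (u : (H.sourceElim v hsrc).V) : (H.sourceElim v hsrc).IsSink u ↔ H.IsSink u.1 :=
  ⟨fun h x hx => h ⟨x, fun h' => u.2 (hx.symm.trans h')⟩ (Subtype.ext hx),
    fun h x hx => h x.1 (congrArg Subtype.val hx)⟩

/-- Source elimination never deletes an edge leaving a surviving vertex. -/
lemma ElimChain.isSink_vmap {E : FinGraph} :
    ∀ {H : FinGraph} (c : ElimChain E H) (u : H.V), H.IsSink u ↔ E.IsSink (c.vmap u)
  | _, .refl, _ => Iff.rfl
  | _, .step c _ hsrc, u => (isSink_sourceElim hsrc u).trans (c.isSink_vmap u.1)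

/-- The sinks of the initial graph lost along a chain of source eliminations. -/
abbrev ElimChain.Lost {E H : FinGraph} (c : ElimChain E H) : Type :=
  {w : E.V // E.IsSink w ∧ w ∉ Set.range c.vmap}

lemma ElimChain.mem_range_step {E H : FinGraph} (c : ElimChain E H) (v : H.V)
    (hsrc : H.IsSource v) (w : E.V) :
    w ∈ Set.range (ElimChain.step c v hsrc).vmap ↔ w ∈ Set.range c.vmap ∧ w ≠ c.vmap v := by
  constructor
  · rintro ⟨u, rfl⟩
    exact ⟨⟨u.1, rfl⟩, fun h => u.2 (c.vmap_injective h)⟩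
  · rintro ⟨⟨u, rfl⟩, h⟩
    exact ⟨⟨u, fun h' => h (by rw [h'])⟩, rfl⟩

/-- Eliminating a regular source loses no sink. -/
lemma ElimChain.card_lost_regular {E H : FinGraph} (c : ElimChain E H) (v : H.V)
    (hsrc : H.IsSource v) (hv : H.IsRegular v) :
    Nat.card (ElimChain.step c v hsrc).Lost = Nat.card c.Lost := by
  refine Nat.card_congr (Equiv.subtypeEquivRight fun w => and_congr_right fun hw => ?_)
  rw [c.mem_range_step, not_and_or, not_not, or_iff_left]
  rintro rfl
  exact not_isSink_iff.2 hv ((c.isSink_vmap v).2 hw)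

/-- Eliminating an isolated vertex loses exactly one sink. -/
lemma ElimChain.card_lost_isolated {E H : FinGraph} (c : ElimChain E H) (v : H.V)
    (hsrc : H.IsSource v) (hv : H.IsSink v) :
    Nat.card (ElimChain.step c v hsrc).Lost = Nat.card c.Lost + 1 := by
  classical
  have h : {w : E.V | E.IsSink w ∧ w ∉ Set.range (ElimChain.step c v hsrc).vmap} =
      insert (c.vmap v) {w : E.V | E.IsSink w ∧ w ∉ Set.range c.vmap} := by
    ext w
    simp only [Set.mem_ofPred_eq, Set.mem_insert_iff, c.mem_range_step, not_and_or, not_not]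
    have : w = c.vmap v → E.IsSink w := by
      rintro rfl
      exact (c.isSink_vmap v).1 hv
    tauto
  have h2 := Set.ncard_insert_of_notMem
    (a := c.vmap v) (s := {w : E.V | E.IsSink w ∧ w ∉ Set.range c.vmap})
    (fun hw => hw.2 ⟨v, rfl⟩) (Set.toFinite _)
  rw [← h] at h2
  exact h2

end FinGraph

section chains

open LeavittPathAlgebra

variable (K : Type) [Field K]

/-- Eliminating a regular source is the special case of a collapse in which no edge ends at the
collapsed vertex. -/
lemma stableMorita_sourceElim (H : FinGraph) (v : H.V) (hsrc : H.IsSource v)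
    (hv : H.IsRegular v) :
    StableMorita (LeavittPathAlgebra K H) (LeavittPathAlgebra K (H.sourceElim v hsrc)) := by
  have hnl : ∀ e : H.E, H.s e = v → H.r e ≠ v := fun e _ => hsrc e
  refine (Collapse.stableMorita K hnl hv).trans ?_
  have : IsEmpty ({e : H.E // H.r e = v} × {f : H.E // H.s f = v}) := ⟨fun x => hsrc _ x.1.2⟩
  let eE : (H.collapse v hnl).E ≃ (H.sourceElim v hsrc).E :=
    (Equiv.sumEmpty _ _).trans (Equiv.subtypeEquivRight fun x => by simp [hsrc x])
  obtain ⟨e⟩ := nonempty_ringEquiv_of_iso (K := K) (G := H.collapse v hnl)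
    (H := H.sourceElim v hsrc) (Equiv.refl _) eE
    (fun x => by
      rcases x with x | x
      · rfl
      · exact isEmptyElim x)
    (fun x => by
      rcases x with x | x
      · rfl
      · exact isEmptyElim x)
  exact StableMorita.of_ringEquiv e

/-- The ring isomorphism `K^n × (K × A) ≃ K^(n+1) × A`. -/
def prodSuccRing (n : ℕ) (A : Type) [Ring A] :
    (Fin n → K) × (K × A) ≃+* (Fin (n + 1) → K) × A where
  toFun x := (Fin.cons x.2.1 x.1, x.2.2)
  invFun x := (Fin.tail x.1, x.1 0, x.2)
  left_inv x := by simp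
  right_inv x := by simp
  map_mul' x y := by
    refine Prod.ext ?_ rfl
    funext i
    refine Fin.cases ?_ (fun i => ?_) i <;> simp
  map_add' x y := by
    refine Prod.ext ?_ rfl
    funext i
    refine Fin.cases ?_ (fun i => ?_) i <;> simp

lemma stableMorita_elimChain {E H : FinGraph} (c : FinGraph.ElimChain E H) :
    StableMorita (LeavittPathAlgebra K E)
      ((Fin (Nat.card c.Lost) → K) × LeavittPathAlgebra K H) := by
  induction c with
  | refl =>
    have h0 : Nat.card (FinGraph.ElimChain.refl (E := E)).Lost = 0 := by
      have : IsEmpty (FinGraph.ElimChain.refl (E := E)).Lost := ⟨fun w => w.2.2 ⟨w.1, rfl⟩⟩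
      exact Nat.card_of_isEmpty
    rw [h0]
    exact StableMorita.of_ringEquiv
      { toFun := fun a => (0, a)
        invFun := fun a => a.2
        left_inv := fun a => rfl
        right_inv := fun a => Prod.ext (Subsingleton.elim _ _) rfl
        map_mul' := fun a b => Prod.ext (Subsingleton.elim _ _) rfl
        map_add' := fun a b => Prod.ext (Subsingleton.elim _ _) rfl }
  | @step H c v hsrc ih =>
    by_cases hv : H.IsSink v
    · rw [c.card_lost_isolated v hsrc hv]
      obtain ⟨e⟩ := nonempty_ringEquiv_isolated (K := K) H v hsrc hv
      exact (ih.trans ((StableMorita.of_ringEquiv e).prod _)).trans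
        (StableMorita.of_ringEquiv (prodSuccRing K _ _))
    · rw [FinGraph.not_isSink_iff] at hv
      rw [c.card_lost_regular v hsrc hv]
      exact ih.trans ((stableMorita_sourceElim K H v hsrc hv).prod _)

lemma stableMorita_collapseChain {E F : FinGraph} (c : FinGraph.CollapseChain E F) :
    StableMorita (LeavittPathAlgebra K E) (LeavittPathAlgebra K F) := by
  induction c with
  | refl => exact StableMorita.of_ringEquiv (RingEquiv.refl _)
  | step c v hreg hnl ih => exact ih.trans (Collapse.stableMorita K hnl hreg)

end chains

/-- `L_K(E)` is Morita equivalent to `K^k ⊕ L_K(F)`, where `k` counts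
the sinks of `E` that do not survive into `E_sf`, and `F` is any totally looped graph
obtained from `E_sf` by a chain of collapses at regular vertices not based at loops. -/
theorem decomposition_moritaEquivalent (K : Type) [Field K] (E Esf F : FinGraph)
    (c : FinGraph.ElimChain E Esf) (hsf : Esf.IsSourceFree ∨ Esf.IsTrivial)
    (hne : Nonempty Esf.V) (cc : FinGraph.CollapseChain Esf F) (hF : F.TotallyLooped)
    (k : ℕ) (hk : k = Nat.card {v : E.V // E.IsSink v ∧ v ∉ Set.range c.vmap}) :
    MoritaEquivalent (LeavittPathAlgebra K E) ((Fin k → K) × LeavittPathAlgebra K F) := by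
  subst hk
  exact ((stableMorita_elimChain K c).trans ((stableMorita_collapseChain K cc).prod _)).morita
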